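/- arXiv:0910.5076 — 2 statements merged into one kernel-verified Lean document; each statement's English description precedes it below -/
import Mathlib

section
/- Likelihood-ratio convergence on the random set: for computable probabilities P and Q on (Ω,B), R^P ⊆ {x∞ : lim_{x→x∞} r(x) exists and is finite}, where r(x) := Q(x)/P(x) if P(x) > 0 and r(x) := 0 otherwise, and the limit is taken along prefixes x of x∞. -/
/-!
Under `P`, the ratio `r(x) = Q(x) / P(x)` is a nonnegative supermartingale, and the proof is an
effective version of Doob's convergence argument: each way of failing to converge is covered by a
Martin-Löf test.

If some prefix of `ω` is `P`-null, the ratio is eventually `0`. Otherwise two tests suffice.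

* Boundedness (`Random1.exists_bound`): the strings with `2 ^ (n + 1) * P(x) < Q(x)` cover a set of
  `P`-measure at most `2⁻¹ ^ (n + 1)`.
* No infinite oscillation (`Random1.no_upcrossings`): let `V k` be the set of strings completing
  `k` upcrossings from below `a / d` to above `b / d`. Comparing `P` and `Q` at the top and at
  the bottom of the last upcrossing gives
  `b * P[V (k+1)] ≤ d * Q[V (k+1)] ≤ d * Q[low points] ≤ a * P[low points] ≤ a * P[V k]`,
  so `P[V k] ≤ (a / b) ^ k` (`measure_reach_crossStep_le`), and `V (m * (n + 1))` is a test as soon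
  as `(a / b) ^ m < 1 / 2`.

A bounded real sequence with no infinite oscillation across any rational interval converges. Both
measure estimates rest on `measure_biUnion_cyl_le`: an inequality of measures on each cylinder of a
family passes to the union.

For effectivity, the strict inequalities between values of `P` and `Q` are semi-decided by
comparing natural-number approximations (`exists_certificate`), and `V k` is enumerated by a
nondeterministic search (`reSet_reach`). The type `ℚ` is seen by `Computable` through an
enumeration of reduced fractions in increasing order of code, so numerators and denominators have
to be shown computable first; this needs an unbounded search through the decidable set of codes.
-/

open MeasureTheory Filter Set
open scoped ENNReal NNReal

namespace AlgRand

/-- `S` : finite binary strings. -/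
abbrev S : Type := List Bool

/-- `Seq` : infinite binary sequences (the space Ω). -/
abbrev Seq : Type := ℕ → Bool

/-- A finite string is a prefix of an infinite sequence. -/
def PrefixSeq (x : S) (ω : Seq) : Prop := ∀ i : Fin x.length, x.get i = ω i

/-- The first `n` bits of an infinite sequence. -/
def seqTake (ω : Seq) (n : ℕ) : S := List.ofFn fun i : Fin n => ω i

/-- Cylinder set Δ(x) ⊆ Ω. -/
def cyl (x : S) : Set Seq := {ω | PrefixSeq x ω}

/-- Product cylinder Δ(x,y) ⊆ Ω². -/
def cyl2 (xy : S × S) : Set (Seq × Seq) := cyl xy.1 ×ˢ cyl xy.2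

/-- Prefix (partial order) on S². -/
def Pre2 (a b : S × S) : Prop := a.1 <+: b.1 ∧ a.2 <+: b.2

/-- A pair of strings is a (strict) prefix of a pair of sequences. -/
def Pre2Seq (a : S × S) (ω : Seq × Seq) : Prop := PrefixSeq a.1 ω.1 ∧ PrefixSeq a.2 ω.2

/-- Recursively enumerable subset of a primcodable type. -/
def RESet {β : Type} [Primcodable β] (A : Set β) : Prop :=
  ∃ f : ℕ → Option β, Computable f ∧ A = {a | ∃ n, f n = some a}

/-- A computable probability measure on Ω. -/
def ComputableProb (P : Measure Seq) : Prop :=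
  IsProbabilityMeasure P ∧
    ∃ p : S × ℕ → ℚ, Computable p ∧
      ∀ (x : S) (k : ℕ), 0 < k → |(P (cyl x)).toReal - (p (x, k) : ℝ)| < 1 / k

/-- A computable probability measure on Ω². -/
def ComputableProb2 (P : Measure (Seq × Seq)) : Prop :=
  IsProbabilityMeasure P ∧
    ∃ p : (S × S) × ℕ → ℚ, Computable p ∧
      ∀ (xy : S × S) (k : ℕ), 0 < k → |(P (cyl2 xy)).toReal - (p (xy, k) : ℝ)| < 1 / k

/-- Ũ_n, the open set covered by the n-th level of a test. -/
def testUnion {α β : Type} (C : β → Set α) (U : Set (ℕ × β)) (n : ℕ) : Set α :=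
  ⋃ x ∈ {x | (n, x) ∈ U}, C x

/-- Martin-Löf test w.r.t. a measure, generic in the cylinder function `C`. -/
def IsMLTest {α β : Type} [MeasurableSpace α] [Primcodable β]
    (C : β → Set α) (P : Measure α) (U : Set (ℕ × β)) : Prop :=
  RESet U ∧ (∀ n, testUnion C U (n + 1) ⊆ testUnion C U n) ∧
    ∀ n, P (testUnion C U n) < (2⁻¹ : ℝ≥0∞) ^ n

/-- Martin-Löf randomness: ω avoids the limit of every test. -/
def MLRandom {α β : Type} [MeasurableSpace α] [Primcodable β]
    (C : β → Set α) (P : Measure α) (ω : α) : Prop :=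
  ∀ U, IsMLTest C P U → ω ∉ ⋂ n, testUnion C U n

/-- ω ∈ R^P, for P on Ω. -/
abbrev Random1 (P : Measure Seq) (ω : Seq) : Prop := MLRandom cyl P ω

/-- ω ∈ R^P, for P on Ω². -/
abbrev Random2 (P : Measure (Seq × Seq)) (ω : Seq × Seq) : Prop := MLRandom cyl2 P ω

/-- Marginal distribution P_X on the first coordinate. -/
noncomputable def margX (P : Measure (Seq × Seq)) : Measure Seq := P.map Prod.fst

/-- Marginal distribution P_Y on the second coordinate. -/
noncomputable def margY (P : Measure (Seq × Seq)) : Measure Seq := P.map Prod.snd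

/-- Conditional probability P(x|y) = P(x,y)/P_Y(y), with value 0 when P_Y(y) = 0. -/
noncomputable def condP (P : Measure (Seq × Seq)) (x y : S) : ℝ :=
  (P (cyl2 (x, y))).toReal / (P (Set.univ ×ˢ cyl y)).toReal

/-- P(x|yinf) := lim_{y → yinf} P(x|y) along prefixes of yinf (junk value if no limit). -/
noncomputable def condPLim (P : Measure (Seq × Seq)) (x : S) (yinf : Seq) : ℝ :=
  limUnder atTop fun m => condP P x (seqTake yinf m)

/-- Conditional probability P(y|x) = P(x,y)/P_X(x), with value 0 when P_X(x) = 0. -/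
noncomputable def condX (P : Measure (Seq × Seq)) (y x : S) : ℝ :=
  (P (cyl2 (x, y))).toReal / (P (cyl x ×ˢ Set.univ)).toReal

/-- P(y|xinf) := lim_{x → xinf} P(y|x) along prefixes of xinf (junk value if no limit). -/
noncomputable def condXLim (P : Measure (Seq × Seq)) (y : S) (xinf : Seq) : ℝ :=
  limUnder atTop fun m => condX P y (seqTake xinf m)

/-- The set S ∪ Ω of finite or infinite binary sequences. -/
inductive SW : Type where
  | fin : S → SW
  | inf : Seq → SW

/-- Prefix order ⊑ on S ∪ Ω. -/
def SW.le : SW → SW → Prop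
  | .fin x, .fin y => x <+: y
  | .fin x, .inf ω => PrefixSeq x ω
  | .inf ω, .inf ω' => ω = ω'
  | .inf _, .fin _ => False

/-- (S ∪ Ω)². -/
abbrev SW2 : Type := SW × SW

/-- Componentwise prefix order ⊑ on (S ∪ Ω)². -/
def SW2.le (a b : SW2) : Prop := SW.le a.1 b.1 ∧ SW.le a.2 b.2

/-- Length |x| ∈ ℕ∞ of an element of S ∪ Ω. -/
def SW.len : SW → ℕ∞
  | .fin x => (x.length : ℕ∞)
  | .inf _ => ⊤

/-- |p| = |p₁| + |p₂| for p ∈ (S ∪ Ω)². -/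
def SW2.len (a : SW2) : ℕ∞ := SW.len a.1 + SW.len a.2

/-- Δ(x) for x ∈ S ∪ Ω. -/
def SW.cylW : SW → Set Seq
  | .fin x => cyl x
  | .inf ω => {ω}

/-- Δ(x,y) for (x,y) ∈ (S ∪ Ω)². -/
def SW2.cylW (a : SW2) : Set (Seq × Seq) := SW.cylW a.1 ×ˢ SW.cylW a.2

/-- Embedding S → S ∪ Ω. -/
def emb1 (x : S) : SW := SW.fin x

/-- Embedding S² → (S ∪ Ω)². -/
def emb2 (p : S × S) : SW2 := (SW.fin p.1, SW.fin p.2)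

/-- Embedding Ω² → (S ∪ Ω)². -/
def inf2 (ω : Seq × Seq) : SW2 := (SW.inf ω.1, SW.inf ω.2)

/-- Least upper bound with respect to a relation. -/
def IsSupRel {V : Type} (le : V → V → Prop) (A : Set V) (s : V) : Prop :=
  (∀ a ∈ A, le a s) ∧ ∀ b, (∀ a ∈ A, le a b) → le s b

/-- `f` is a computable monotone function defined by an r.e. set `F` satisfying
condition (3) of the paper:  (λ,λ) ∈ F_p and ⋁_{p'⊑p} F_{p'} exists for every p,
and f(q) = ⋁ {x : ∃ p' ⊑ q, (p',x) ∈ F}. -/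
def CompMono {D E : Type} {W V : Type} [Primcodable D] [Primcodable E]
    (embD : D → W) (leW : W → W → Prop) (embE : E → V) (leV : V → V → Prop)
    (eps : E) (f : W → V) : Prop :=
  ∃ F : Set (D × E), RESet F ∧
    (∀ p : D, (p, eps) ∈ F ∧
        ∃ s, IsSupRel leV (embE '' {x | ∃ p' : D, leW (embD p') (embD p) ∧ (p', x) ∈ F}) s) ∧
    ∀ q : W, IsSupRel leV (embE '' {x | ∃ p' : D, leW (embD p') q ∧ (p', x) ∈ F}) (f q)

/-- Computable monotone function (S ∪ Ω)² → (S ∪ Ω)². -/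
def CompMono22 (f : SW2 → SW2) : Prop := CompMono emb2 SW2.le emb2 SW2.le (([], []) : S × S) f

/-- Computable monotone function S ∪ Ω → (S ∪ Ω)². -/
def CompMono12 (g : SW → SW2) : Prop := CompMono emb1 SW.le emb2 SW2.le (([], []) : S × S) g

/-- Computable monotone function (S ∪ Ω)² → S ∪ Ω. -/
def CompMono21 (e : SW2 → SW) : Prop := CompMono emb2 SW2.le emb1 SW.le ([] : S) e

/-- Computable monotone function S ∪ Ω → S ∪ Ω. -/
def CompMono11 (ρ : SW → SW) : Prop := CompMono emb1 SW.le emb1 SW.le ([] : S) ρ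

/-- Km²_f(x) := min{|p₁|+|p₂| : x ⊑ f(p₁,p₂)} ∈ ℕ∞. -/
noncomputable def Km2 (f : SW2 → SW2) (x : SW2) : ℕ∞ :=
  ⨅ (p : SW2) (_ : SW2.le x (f p)), SW2.len p

/-- Km_f(x) := min{|p| : x ⊑ f(p,λ)} ∈ ℕ∞. -/
noncomputable def Km1 (f : SW2 → SW2) (x : SW2) : ℕ∞ :=
  ⨅ (p : SW) (_ : SW2.le x (f (p, SW.fin []))), SW.len p

/-- Km(x|y) := min{|p| : (x,λ) ⊑ u(p,y)} ∈ ℕ∞. -/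
noncomputable def KmCond (u : SW2 → SW2) (x y : SW) : ℕ∞ :=
  ⨅ (p : SW) (_ : SW2.le (x, SW.fin []) (u (p, y))), SW.len p

/-- Km_g(x) := min{|p| : x ⊑ g(p)} for g : S ∪ Ω → (S ∪ Ω)². -/
noncomputable def KmOf12 (g : SW → SW2) (x : SW2) : ℕ∞ :=
  ⨅ (p : SW) (_ : SW2.le x (g p)), SW.len p

/-- Optimality of a computable monotone function on (S ∪ Ω)². -/
def Optimal (u : SW2 → SW2) : Prop :=
  CompMono22 u ∧
    ∀ f : SW2 → SW2, CompMono22 f → ∃ c : ℕ, ∀ x : SW2, Km2 u x ≤ Km2 f x + (c : ℕ∞)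

/-- 2^{-n} for n ∈ ℕ∞ (with 2^{-∞} = 0), as an extended nonnegative real. -/
noncomputable def tpow (n : ℕ∞) : ℝ≥0∞ := if n = ⊤ then 0 else (2⁻¹ : ℝ≥0∞) ^ n.toNat

/-- Non-overlapping subset of (S ∪ Ω)². -/
def NonOverlapW (A : Set SW2) : Prop := A.Pairwise fun a b => SW2.cylW a ∩ SW2.cylW b = ∅

/-- Non-overlapping subset of S². -/
def NonOverlapF (A : Set (S × S)) : Prop := A.Pairwise fun a b => cyl2 a ∩ cyl2 b = ∅

/-- Condition (4): any two members of A are comparable or have disjoint cylinders. -/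
def Cond4 (A : Set (S × S)) : Prop :=
  ∀ a ∈ A, ∀ b ∈ A, Pre2 a b ∨ Pre2 b a ∨ cyl2 a ∩ cyl2 b = ∅

/-- Condition (5): relative complements of cylinders are non-overlapping unions within A. -/
def Cond5 (A : Set (S × S)) : Prop :=
  ∀ a ∈ A, ∀ b ∈ A, ∃ α ⊆ A, NonOverlapF α ∧ cyl2 a ∩ (cyl2 b)ᶜ = ⋃ z ∈ α, cyl2 z

/-- A(xinf) := {x ∈ A | x ⊏ xinf}. -/
def Asec (A : Set (S × S)) (ω : Seq × Seq) : Set (S × S) := {a ∈ A | Pre2Seq a ω}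

/-- sup_{x ∈ A} (−log P(x) − K(x)) < ∞. -/
def KmBound (P : Measure (Seq × Seq)) (K : S × S → ℕ∞) (A : Set (S × S)) : Prop :=
  ∃ c : ℝ, ∀ x ∈ A, ∀ k : ℕ, K x = (k : ℕ∞) →
    0 < P (cyl2 x) ∧ -Real.logb 2 ((P (cyl2 x)).toReal) ≤ (k : ℝ) + c

/-- sup_{x ∈ A} |log P(x) + K(x)| < ∞. -/
def KmBoundAbs (P : Measure (Seq × Seq)) (K : S × S → ℕ∞) (A : Set (S × S)) : Prop :=
  ∃ c : ℝ, ∀ x ∈ A, ∃ k : ℕ, K x = (k : ℕ∞) ∧ 0 < P (cyl2 x) ∧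
    |Real.logb 2 ((P (cyl2 x)).toReal) + (k : ℝ)| ≤ c

/-- The conditional probability P(·|yinf) is computable relative to the oracle yinf:
there is a partial computable A(x,y,k), monotone in y, approximating P(x|yinf)
to within 1/k along prefixes y of yinf. -/
def CondComputableAt (P : Measure (Seq × Seq)) (yinf : Seq) : Prop :=
  ∃ A : (S × S) × ℕ →. ℚ, Partrec A ∧
    (∀ (x y z : S) (k : ℕ) (q : ℚ), q ∈ A ((x, y), k) → y <+: z → q ∈ A ((x, z), k)) ∧
    ∀ (x : S) (k : ℕ), 0 < k → ∃ (m : ℕ) (q : ℚ), q ∈ A ((x, seqTake yinf m), k) ∧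
      |condPLim P x yinf - (q : ℝ)| < 1 / k

/-- A Martin-Löf test w.r.t. Q which is r.e. relative to the oracle yinf. -/
def RelMLTest (Q : Measure Seq) (yinf : Seq) (U : ℕ → Set S) : Prop :=
  (∃ B : (ℕ × ℕ) × S →. S, Partrec B ∧
      (∀ (i n : ℕ) (y z x : S), x ∈ B ((i, n), y) → y <+: z → x ∈ B ((i, n), z)) ∧
      ∀ n, U n = {x | ∃ i m, x ∈ B ((i, n), seqTake yinf m)}) ∧
  (∀ n, (⋃ x ∈ U (n + 1), cyl x) ⊆ ⋃ x ∈ U n, cyl x) ∧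
  ∀ n, Q (⋃ x ∈ U n, cyl x) < (2⁻¹ : ℝ≥0∞) ^ n

/-- Martin-Löf randomness w.r.t. Q relative to the oracle yinf. -/
def RelMLRandom (Q : Measure Seq) (yinf xinf : Seq) : Prop :=
  ∀ U, RelMLTest Q yinf U → xinf ∉ ⋂ n, ⋃ x ∈ U n, cyl x

/-- Likelihood ratio r(x) = Q(x)/P(x), with value 0 when P(x) = 0. -/
noncomputable def ratio (P Q : Measure Seq) (x : S) : ℝ :=
  (Q (cyl x)).toReal / (P (cyl x)).toReal

/-- P(·|yinf) f,(xinf,yinf)-effectively converges with rate g. -/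
def EffConv (P : Measure (Seq × Seq)) (xinf yinf : Seq) (f : ℕ → ℚ) (g : ℕ → ℕ) : Prop :=
  Computable g ∧ Monotone g ∧
    ∀ x y : S, PrefixSeq x xinf → PrefixSeq y yinf → g x.length ≤ y.length →
      |condP P x y / condPLim P x yinf - 1| < (f x.length : ℝ)

/-- A_g(xinf,yinf) := {(x,y) : |y| = g(|x|), (x,y) ⊏ (xinf,yinf)}. -/
def AgSec (g : ℕ → ℕ) (xinf yinf : Seq) : Set (S × S) :=
  {xy | xy.2.length = g xy.1.length ∧ PrefixSeq xy.1 xinf ∧ PrefixSeq xy.2 yinf}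

/-- A uniformly computable family of probability measures on Ω. -/
def UnifComputableFam (Pn : ℕ → Measure Seq) : Prop :=
  (∀ n, IsProbabilityMeasure (Pn n)) ∧
    ∃ A : (ℕ × S) × ℕ → ℚ, Computable A ∧
      ∀ (n : ℕ) (x : S) (k : ℕ), 0 < k →
        |(A ((n, x), k) : ℝ) - ((Pn n) (cyl x)).toReal| < 1 / k

/-- A computable sequence of reals (e.g. a computable probability on ℕ). -/
def ComputableRealSeq (α : ℕ → ℝ) : Prop :=
  ∃ a : ℕ × ℕ → ℚ, Computable a ∧ ∀ (n k : ℕ), 0 < k → |α n - (a (n, k) : ℝ)| < 1 / k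

/-- The mixture Σ_n α(n) P_n. -/
noncomputable def mixture (α : ℕ → ℝ) (Pn : ℕ → Measure Seq) : Measure Seq :=
  Measure.sum fun n => ENNReal.ofReal (α n) • Pn n

/-- The conditional probability measure P(·|y) on Ω, for a finite string y. -/
noncomputable def condMeasGivenY (P : Measure (Seq × Seq)) (y : S) : Measure Seq :=
  (P (Set.univ ×ˢ cyl y))⁻¹ • ((P.restrict (Set.univ ×ˢ cyl y)).map Prod.fst)

/-- The posterior distribution P_{Y|X}(·|x) on Ω, for a finite string x. -/
noncomputable def postMeas (P : Measure (Seq × Seq)) (x : S) : Measure Seq :=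
  (P (cyl x ×ˢ Set.univ))⁻¹ • ((P.restrict (cyl x ×ˢ Set.univ)).map Prod.snd)

/-! ### Computability of numerators and denominators of rationals -/

theorem encode_rat (q : ℚ) :
    @Encodable.encode ℚ Rat.instEncodable q = Nat.pair (Encodable.encode q.num) q.den := by
  rcases q with ⟨a, b, c, d⟩; rfl

theorem natAbs_eq_encode (z : ℤ) : z.natAbs = (@Encodable.encode ℤ Int.encodable z + 1) / 2 := by
  rcases z with n | n
  · change n = (2 * n + 1) / 2; omega
  · change n + 1 = (2 * n + 1 + 1) / 2; omega

theorem toNat_eq_encode (z : ℤ) : z.toNat =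
    if @Encodable.encode ℤ Int.encodable z % 2 = 0 then @Encodable.encode ℤ Int.encodable z / 2
    else 0 := by
  rcases z with n | n
  · change n = if (2 * n) % 2 = 0 then (2 * n) / 2 else 0
    rw [if_pos (by omega)]; omega
  · change 0 = if (2 * n + 1) % 2 = 0 then (2 * n + 1) / 2 else 0
    rw [if_neg (by omega)]

theorem mem_range_encode_rat (m : ℕ) :
    m ∈ range (@Encodable.encode ℚ Rat.instEncodable) ↔
      0 < m.unpair.2 ∧ ∀ k < m.unpair.2 + 1,
        k = 1 ∨ ¬(((m.unpair.1 + 1) / 2) % k = 0 ∧ m.unpair.2 % k = 0) := by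
  have key : (∃ q : ℚ, @Encodable.encode ℚ Rat.instEncodable q = m) ↔
      0 < m.unpair.2 ∧ Nat.Coprime ((m.unpair.1 + 1) / 2) m.unpair.2 := by
    constructor
    · rintro ⟨q, rfl⟩
      rw [encode_rat, Nat.unpair_pair]
      refine ⟨q.den_pos, ?_⟩
      have := q.reduced
      rw [natAbs_eq_encode] at this
      exact this
    · rintro ⟨h1, h2⟩
      obtain ⟨z, hz⟩ : ∃ z : ℤ, @Encodable.encode ℤ Int.encodable z = m.unpair.1 :=
        ⟨Equiv.intEquivNat.symm m.unpair.1, Equiv.intEquivNat.apply_symm_apply _⟩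
      refine ⟨⟨z, m.unpair.2, h1.ne', ?_⟩, ?_⟩
      · rw [natAbs_eq_encode, hz]; exact h2
      · rw [encode_rat]
        simp only [hz, Nat.pair_unpair]
  rw [mem_range, key]
  refine and_congr_right fun h => ⟨fun hc k _ => ?_, fun hk => ?_⟩
  · by_contra! hcon
    obtain ⟨hne, ha, hd⟩ := hcon
    exact hne (Nat.eq_one_of_dvd_coprimes hc (Nat.dvd_of_mod_eq_zero ha) (Nat.dvd_of_mod_eq_zero hd))
  · rcases hk (Nat.gcd ((m.unpair.1 + 1) / 2) m.unpair.2)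
      (Nat.lt_succ_of_le (Nat.gcd_le_right _ h)) with h1 | h1
    · exact h1
    · exact absurd ⟨Nat.mod_eq_zero_of_dvd (Nat.gcd_dvd_left _ _),
        Nat.mod_eq_zero_of_dvd (Nat.gcd_dvd_right _ _)⟩ h1

open Primrec in
theorem primrecPred_range_encode_rat :
    PrimrecPred (· ∈ range (@Encodable.encode ℚ Rat.instEncodable)) := by
  have hd : Primrec fun m : ℕ => m.unpair.2 := snd.comp Primrec.unpair
  have hc : Primrec fun m : ℕ => m.unpair.1 := fst.comp Primrec.unpair
  have hR : PrimrecRel fun k m : ℕ =>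
      k = 1 ∨ ¬(((m.unpair.1 + 1) / 2) % k = 0 ∧ m.unpair.2 % k = 0) := by
    refine PrimrecPred.or (Primrec.eq.comp fst (const 1)) (PrimrecPred.not (PrimrecPred.and ?_ ?_))
    · exact Primrec.eq.comp (nat_mod.comp
        (nat_div.comp (Primrec.succ.comp (hc.comp snd)) (const 2)) fst) (const 0)
    · exact Primrec.eq.comp (nat_mod.comp (hd.comp snd) fst) (const 0)
  refine PrimrecPred.of_eq (PrimrecPred.and (nat_lt.comp (const 0) hd)
    (hR.forall_lt.comp (Primrec.succ.comp hd) Primrec.id)) fun m => ?_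
  exact (mem_range_encode_rat m).symm

theorem computable_nat_subtype_ofNat (s : Set ℕ) [DecidablePred (· ∈ s)] [Infinite s]
    (hs : PrimrecPred (· ∈ s)) : Computable fun n => (Nat.Subtype.ofNat s n : ℕ) := by
  have hex : ∀ m : ℕ, ∃ k, m + k + 1 ∈ s := fun m => by
    obtain ⟨b, hb, hmb⟩ := (infinite_coe_iff.1 ‹Infinite s›).exists_gt m
    exact ⟨b - m - 1, by rwa [show m + (b - m - 1) + 1 = b by omega]⟩
  have hfind : Computable fun m => Nat.find (hex m) := by
    have hp : Partrec₂ fun (m k : ℕ) => (Part.some (decide (m + k + 1 ∈ s)) : Part Bool) :=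
      (hs.decide.comp (Primrec.succ.comp (Primrec.nat_add.comp Primrec.fst Primrec.snd))).to_comp
    refine (Partrec.rfind hp).of_eq_tot fun m => ?_
    refine Nat.mem_rfind.2 ⟨?_, fun {k} hk => ?_⟩
    · simpa using Nat.find_spec (hex m)
    · simpa using Nat.find_min (hex m) hk
  have hnext : Computable fun m => m + Nat.find (hex m) + 1 :=
    Computable.succ.comp (Primrec.nat_add.to_comp.comp Computable.id hfind)
  refine (Computable.nat_rec (f := fun n : ℕ => n) (g := fun _ => (Nat.Subtype.ofNat s 0 : ℕ))
    (h := fun _ p => p.2 + Nat.find (hex p.2) + 1) Computable.id (Computable.const _)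
    (hnext.comp (Computable.snd.comp Computable.snd))).of_eq fun n => ?_
  induction n with
  | zero => rfl
  | succ n ih =>
    simp only at ih ⊢
    rw [ih]
    rfl

/-- The canonical code of a rational (numerator–denominator pair) is computable from its index in
the `Denumerable` enumeration, which is what `Computable` sees. -/
theorem computable_encode_rat : Computable (@Encodable.encode ℚ Rat.instEncodable) := by
  let := @Encodable.decidableRangeEncode ℚ Rat.instEncodable
  let : Infinite (range (@Encodable.encode ℚ Rat.instEncodable)) :=
    Infinite.of_injective _ (Equiv.ofInjective _ Encodable.encode_injective).injective
  refine ((computable_nat_subtype_ofNat _ primrecPred_range_encode_rat).comp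
    Computable.encode).of_eq fun q => ?_
  have h := Denumerable.ofNat_encode q
  conv_rhs => rw [← h]
  have : ∀ n : ℕ, @Encodable.encode ℚ Rat.instEncodable (Denumerable.ofNat ℚ n)
     = (Nat.Subtype.ofNat (range (@Encodable.encode ℚ Rat.instEncodable)) n : ℕ) := by
    intro n
    exact congrArg Subtype.val ((Encodable.equivRangeEncode ℚ).apply_symm_apply _)
  exact (this _).symm

theorem computable_rat_den : Computable fun q : ℚ => q.den :=
  (Computable.snd.comp (Computable.unpair.comp computable_encode_rat)).of_eq fun q => by
    rw [encode_rat, Nat.unpair_pair]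

theorem computable_rat_num_toNat : Computable fun q : ℚ => q.num.toNat := by
  have h : Primrec fun c : ℕ => if c % 2 = 0 then c / 2 else 0 :=
    Primrec.ite (Primrec.eq.comp (Primrec.nat_mod.comp Primrec.id (Primrec.const 2))
      (Primrec.const 0)) (Primrec.nat_div.comp Primrec.id (Primrec.const 2)) (Primrec.const 0)
  exact (h.to_comp.comp (Computable.fst.comp (Computable.unpair.comp computable_encode_rat))).of_eq
    fun q => by rw [encode_rat, Nat.unpair_pair, toNat_eq_encode]

/-- The integer part of `k * max q 0`: a negative numerator is truncated to `0`. -/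
def scaledFloor (q : ℚ) (k : ℕ) : ℕ := q.num.toNat * k / q.den

theorem computable_scaledFloor : Computable₂ scaledFloor :=
  Primrec.nat_div.to_comp.comp (Primrec.nat_mul.to_comp.comp
    (computable_rat_num_toNat.comp Computable.fst) Computable.snd)
    (computable_rat_den.comp Computable.fst)

theorem scaledFloor_bounds {q : ℚ} {k : ℕ} {r : ℝ} (hr : 0 ≤ r) (hk : 0 < k)
    (h : |r - (q : ℝ)| < 1 / k) :
    (scaledFloor q k : ℝ) < k * r + 1 ∧ k * r < scaledFloor q k + 2 := by
  have hk' : (0 : ℝ) < k := by exact_mod_cast hk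
  have hd : (0 : ℝ) < q.den := by exact_mod_cast q.den_pos
  have h1 : |k * r - k * q| < 1 := by
    rw [← mul_sub, abs_mul, abs_of_pos hk']
    calc (k : ℝ) * |r - q| < k * (1 / k) := by gcongr
      _ = 1 := by field_simp
  rw [abs_lt] at h1
  have hnum : ((q.num.toNat : ℕ) : ℝ) = max (q.num : ℝ) 0 := by
    have : ((q.num.toNat : ℤ) : ℝ) = ((max q.num 0 : ℤ) : ℝ) := by rw [Int.toNat_eq_max]
    push_cast at this ⊢
    exact_mod_cast this
  have hq : (q : ℝ) * q.den = q.num := by exact_mod_cast Rat.mul_den_eq_num q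
  have hval : ((q.num.toNat * k : ℕ) : ℝ) / q.den = max (k * q : ℝ) 0 := by
    push_cast
    rw [hnum, div_eq_iff hd.ne', ← hq, max_mul_of_nonneg _ _ hd.le, max_mul_of_nonneg _ _ hk'.le]
    congr 1 <;> ring
  have hle : (scaledFloor q k : ℝ) ≤ max (k * q : ℝ) 0 := by
    rw [← hval]; exact Nat.cast_div_le
  have hlt : max (k * q : ℝ) 0 < scaledFloor q k + 1 := by
    rw [← hval, div_lt_iff₀ hd]
    have := Nat.lt_mul_div_succ (q.num.toNat * k) q.den_pos
    unfold scaledFloor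
    rw [Nat.mul_comm q.den] at this
    exact_mod_cast this
  constructor
  · refine hle.trans_lt (max_lt ?_ ?_)
    · linarith [h1.1]
    · positivity
  · linarith [le_max_left (k * q : ℝ) 0]


/-! ### Strings, cylinders and measures of unions of cylinders -/

theorem prefixSeq_iff (x : S) (ω : Seq) : PrefixSeq x ω ↔ seqTake ω x.length = x := by
  unfold PrefixSeq seqTake
  constructor
  · intro h
    refine List.ext_getElem (by simp) fun i h1 h2 => ?_
    simpa using (h ⟨i, h2⟩).symm
  · intro h i
    have h2 : x[(i : ℕ)]? = some (ω i) := by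
      have := congrArg (fun l : S => l[(i : ℕ)]?) h
      simpa using this.symm
    simpa using h2

theorem length_seqTake (ω : Seq) (n : ℕ) : (seqTake ω n).length = n := by simp [seqTake]

theorem prefixSeq_seqTake (ω : Seq) (n : ℕ) : PrefixSeq (seqTake ω n) ω := by
  rw [prefixSeq_iff, length_seqTake]

theorem seqTake_prefix {m n : ℕ} (ω : Seq) (h : m ≤ n) : seqTake ω m <+: seqTake ω n := by
  rw [List.prefix_iff_eq_take]
  refine List.ext_getElem (by simp [seqTake, h]) fun i h1 h2 => ?_
  simp [seqTake]

theorem PrefixSeq.of_prefix {x y : S} {ω : Seq} (h : PrefixSeq y ω) (hxy : x <+: y) :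
    PrefixSeq x ω := by
  obtain ⟨u, rfl⟩ := hxy
  intro i
  have := h ⟨i, by simp; omega⟩
  simpa using this

theorem cyl_subset {x y : S} (hxy : x <+: y) : cyl y ⊆ cyl x :=
  fun _ h => PrefixSeq.of_prefix h hxy

theorem measurableSet_cyl (x : S) : MeasurableSet (cyl x) := by
  have : cyl x = ⋂ i : Fin x.length, (fun ω : Seq => ω i) ⁻¹' {x.get i} := by
    ext ω
    simp [cyl, PrefixSeq, eq_comm]
  rw [this]
  exact MeasurableSet.iInter fun i => measurable_pi_apply _ (measurableSet_singleton _)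

/-- An inequality between measures on each cylinder of a family passes to their union, because the
union is the disjoint union of the cylinders over the prefix-minimal strings of the family. -/
theorem measure_biUnion_cyl_le (μ ν : Measure Seq) (X : Set S)
    (h : ∀ x ∈ X, μ (cyl x) ≤ ν (cyl x)) :
    μ (⋃ x ∈ X, cyl x) ≤ ν (⋃ x ∈ X, cyl x) := by
  set Y : Set S := {x ∈ X | ∀ y ∈ X, y <+: x → y = x} with hY
  have hXY : (⋃ x ∈ X, cyl x) = ⋃ x ∈ Y, cyl x := by
    refine Subset.antisymm (fun ω hω => ?_) (biUnion_subset_biUnion_left fun x hx => hx.1)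
    simp only [mem_iUnion, exists_prop] at hω ⊢
    obtain ⟨x, hxX, hx⟩ := hω
    have hex : ∃ n, seqTake ω n ∈ X := ⟨x.length, by rwa [(prefixSeq_iff x ω).1 hx]⟩
    classical
    refine ⟨seqTake ω (Nat.find hex), ⟨Nat.find_spec hex, fun y hy hyp => ?_⟩,
      prefixSeq_seqTake _ _⟩
    have h1 := (prefixSeq_iff y ω).1 ((prefixSeq_seqTake ω _).of_prefix hyp)
    have h2 : Nat.find hex ≤ y.length := Nat.find_min' hex (by rwa [h1])
    exact hyp.eq_of_length (le_antisymm hyp.length_le (by rwa [length_seqTake]))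
  have hdisj : Y.PairwiseDisjoint cyl := by
    intro x hx y hy hne
    refine Set.disjoint_left.2 fun ω hωx hωy => hne ?_
    have ex := (prefixSeq_iff x ω).1 hωx
    have ey := (prefixSeq_iff y ω).1 hωy
    rcases le_total x.length y.length with hl | hl
    · exact hy.2 x hx.1 (by simpa [ex, ey] using seqTake_prefix ω hl)
    · exact (hx.2 y hy.1 (by simpa [ex, ey] using seqTake_prefix ω hl)).symm
  rw [hXY, measure_biUnion Y.to_countable hdisj fun x _ => measurableSet_cyl x,
    measure_biUnion Y.to_countable hdisj fun x _ => measurableSet_cyl x]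
  exact ENNReal.tsum_le_tsum fun x => h x x.2.1

theorem natCast_mul_measure_le {μ ν : Measure Seq} [IsFiniteMeasure μ] [IsFiniteMeasure ν]
    {a b : ℕ} {X : Set S}
    (h : ∀ x ∈ X, a * (μ (cyl x)).toReal ≤ b * (ν (cyl x)).toReal) :
    (a : ℝ≥0∞) * μ (⋃ x ∈ X, cyl x) ≤ b * ν (⋃ x ∈ X, cyl x) := by
  have := measure_biUnion_cyl_le ((a : ℝ≥0∞) • μ) ((b : ℝ≥0∞) • ν) X fun x hx => by
    simp only [Measure.smul_apply, smul_eq_mul]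
    rw [← ENNReal.toReal_le_toReal (by finiteness) (by finiteness)]
    simpa using h x hx
  simpa using this

/-! ### Semi-decidable comparisons and enumerations -/

theorem ComputableProb.exists_natApprox {μ : Measure Seq} (hμ : ComputableProb μ) :
    ∃ F : S × ℕ → ℕ, Computable F ∧ ∀ x t,
      (F (x, t) : ℝ) < (t + 1 : ℕ) * (μ (cyl x)).toReal + 1 ∧
        (t + 1 : ℕ) * (μ (cyl x)).toReal < F (x, t) + 2 := by
  obtain ⟨-, p, hp, hpa⟩ := hμ
  exact ⟨fun y => scaledFloor (p (y.1, y.2 + 1)) (y.2 + 1),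
    computable_scaledFloor.comp (hp.comp (Computable.fst.pair
      (Computable.succ.comp Computable.snd))) (Computable.succ.comp Computable.snd),
    fun x t => scaledFloor_bounds ENNReal.toReal_nonneg t.succ_pos (hpa x (t + 1) t.succ_pos)⟩

/-- For computable `μ` and `ν` the strict inequality `a * μ (cyl x) < b * ν (cyl x)` is
semi-decidable. The certificates are sound only for the weak inequality, and are monotone
in `a`. -/
theorem exists_certificate {μ ν : Measure Seq} (hμ : ComputableProb μ) (hν : ComputableProb ν) :
    ∃ c : (ℕ × ℕ) × (S × ℕ) → Bool, Computable c ∧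
      (∀ (a b : ℕ) (x : S) (t : ℕ), c ((a, b), (x, t)) = true →
        a * (μ (cyl x)).toReal ≤ b * (ν (cyl x)).toReal) ∧
      (∀ (a b : ℕ) (x : S), a * (μ (cyl x)).toReal < b * (ν (cyl x)).toReal →
        ∃ t, c ((a, b), (x, t)) = true) ∧
      ∀ (a a' b : ℕ) (x : S) (t : ℕ), a ≤ a' →
        c ((a', b), (x, t)) = true → c ((a, b), (x, t)) = true := by
  obtain ⟨F, hF, hFb⟩ := hμ.exists_natApprox
  obtain ⟨G, hG, hGb⟩ := hν.exists_natApprox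
  refine ⟨fun z => decide (z.1.1 * (F z.2 + 2) + z.1.2 ≤ z.1.2 * G z.2), ?_, ?_, ?_, ?_⟩
  · have h1 : Primrec fun w : (ℕ × ℕ) × (ℕ × ℕ) =>
        decide (w.1.1 * (w.2.1 + 2) + w.1.2 ≤ w.1.2 * w.2.2) := by
      refine (Primrec.nat_le.comp (Primrec.nat_add.comp (Primrec.nat_mul.comp
        (Primrec.fst.comp Primrec.fst) (Primrec.nat_add.comp (Primrec.fst.comp Primrec.snd)
        (Primrec.const 2))) (Primrec.snd.comp Primrec.fst)) (Primrec.nat_mul.comp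
        (Primrec.snd.comp Primrec.fst) (Primrec.snd.comp Primrec.snd))).decide
    have h2 : Computable fun z : (ℕ × ℕ) × (S × ℕ) => (z.1, (F z.2, G z.2)) :=
      Computable.fst.pair ((hF.comp Computable.snd).pair (hG.comp Computable.snd))
    exact (h1.to_comp.comp h2).of_eq fun _ => rfl
  · intro a b x t h
    have h : a * (F (x, t) + 2) + b ≤ b * G (x, t) := by simpa using h
    have hf := (hFb x t).2
    have hg := (hGb x t).1
    have h' : (a : ℝ) * (F (x, t) + 2) + b ≤ b * G (x, t) := by exact_mod_cast h
    have ht : (0 : ℝ) < ((t + 1 : ℕ) : ℝ) := by positivity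
    have e1 := mul_le_mul_of_nonneg_left hf.le (Nat.cast_nonneg (α := ℝ) a)
    have e2 := mul_le_mul_of_nonneg_left hg.le (Nat.cast_nonneg (α := ℝ) b)
    refine le_of_mul_le_mul_left ?_ ht
    linarith
  · intro a b x h
    obtain ⟨t, ht⟩ := exists_nat_gt
      ((3 * a + 3 * b : ℝ) / (b * (ν (cyl x)).toReal - a * (μ (cyl x)).toReal))
    rw [div_lt_iff₀ (by linarith)] at ht
    refine ⟨t, ?_⟩
    have hf := (hFb x t).1
    have hg := (hGb x t).2
    suffices a * (F (x, t) + 2) + b ≤ b * G (x, t) by simpa using this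
    have e1 := mul_le_mul_of_nonneg_left hf.le (Nat.cast_nonneg (α := ℝ) a)
    have e2 := mul_le_mul_of_nonneg_left hg.le (Nat.cast_nonneg (α := ℝ) b)
    have : (a : ℝ) * (F (x, t) + 2) + b ≤ b * G (x, t) := by
      push_cast at e1 e2
      nlinarith
    exact_mod_cast this
  · intro a a' b x t haa h
    simp only [decide_eq_true_eq] at h ⊢
    exact le_trans (by gcongr) h

theorem reSet_of_enumeration {β γ : Type} [Primcodable β] [Primcodable γ] {F : γ → Option β}
    (hF : Computable F) : RESet {b | ∃ g, F g = some b} := by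
  refine ⟨fun n => (Encodable.decode (α := γ) n).bind F,
    Computable.option_bind Computable.decode (hF.comp Computable.snd), ?_⟩
  ext b
  simp only [mem_ofPred_eq]
  constructor
  · rintro ⟨g, hg⟩
    exact ⟨Encodable.encode g, by simpa using hg⟩
  · rintro ⟨n, hn⟩
    obtain ⟨g, -, hg⟩ := Option.bind_eq_some_iff.1 hn
    exact ⟨g, hg⟩

/-- The points reached from `x₀` after exactly `k` steps of the nondeterministic partial map
`step`, the second argument of `step` being the choice made. -/
def Reach {β γ : Type} (step : β × γ → Option β) (x₀ : β) : ℕ → Set β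
  | 0 => {x₀}
  | k + 1 => {x | ∃ y ∈ Reach step x₀ k, ∃ e, step (y, e) = some x}

/-- Deterministic run of `step` for `k` steps, with choices read off the list `w`. -/
def run {β γ : Type} (step : β × γ → Option β) (x₀ : β) (w : List γ) (k : ℕ) : Option β :=
  Nat.rec (some x₀) (fun i IH => IH.bind fun y => (w[i]?).bind fun e => step (y, e)) k

theorem run_succ {β γ : Type} (step : β × γ → Option β) (x₀ : β) (w : List γ) (k : ℕ) :
    run step x₀ w (k + 1) =
      (run step x₀ w k).bind fun y => (w[k]?).bind fun e => step (y, e) := rfl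

theorem run_append {β γ : Type} (step : β × γ → Option β) (x₀ : β) (w v : List γ) (k : ℕ)
    (hk : k ≤ w.length) : run step x₀ (w ++ v) k = run step x₀ w k := by
  induction k with
  | zero => rfl
  | succ k ih =>
    rw [run_succ, run_succ, ih (by omega), List.getElem?_append_left (by omega)]

theorem mem_reach_iff {β γ : Type} (step : β × γ → Option β) (x₀ : β) (k : ℕ) (x : β) :
    x ∈ Reach step x₀ k ↔ ∃ w, run step x₀ w k = some x := by
  constructor
  · suffices x ∈ Reach step x₀ k → ∃ w : List γ, w.length = k ∧ run step x₀ w k = some x from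
      fun h => (this h).imp fun _ h => h.2
    induction k generalizing x with
    | zero => rintro rfl; exact ⟨[], rfl, rfl⟩
    | succ k ih =>
      rintro ⟨y, hy, e, he⟩
      obtain ⟨w, hw, hr⟩ := ih y hy
      refine ⟨w ++ [e], by simp [hw], ?_⟩
      rw [run_succ, run_append _ _ _ _ _ hw.ge, hr, ← hw]
      simpa using he
  · rintro ⟨w, hw⟩
    induction k generalizing x with
    | zero => exact (Option.some.inj hw).symm
    | succ k ih =>
      rw [run_succ] at hw
      obtain ⟨y, hy, h2⟩ := Option.bind_eq_some_iff.1 hw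
      obtain ⟨e, -, h3⟩ := Option.bind_eq_some_iff.1 h2
      exact ⟨y, ih y hy, e, h3⟩

theorem reSet_reach {β γ : Type} [Primcodable β] [Primcodable γ] {step : β × γ → Option β}
    (hstep : Computable step) (x₀ : β) {g : ℕ → ℕ} (hg : Computable g) :
    RESet {a : ℕ × β | a.2 ∈ Reach step x₀ (g a.1)} := by
  have hrun : Computable fun a : ℕ × List γ => run step x₀ a.2 (g a.1) := by
    refine Computable.nat_rec (h := fun (a : ℕ × List γ) (p : ℕ × Option β) =>
      p.2.bind fun y => (a.2[p.1]?).bind fun e => step (y, e)) (hg.comp Computable.fst)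
      (Computable.const _) ?_
    refine Computable.option_bind (Computable.snd.comp Computable.snd) ?_
    refine Computable.option_bind (Computable.list_getElem?.comp
      (Computable.snd.comp (Computable.fst.comp Computable.fst))
      (Computable.fst.comp (Computable.snd.comp Computable.fst))) ?_
    exact hstep.comp ((Computable.snd.comp Computable.fst).pair Computable.snd)
  have hF : Computable fun a : ℕ × List γ => (run step x₀ a.2 (g a.1)).map fun x => (a.1, x) :=
    Computable.option_map hrun ((Computable.fst.comp Computable.fst).pair Computable.snd)
  convert reSet_of_enumeration hF using 1
  ext ⟨n, x⟩
  simp [mem_reach_iff]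

/-! ### The two tests -/

/-- One upcrossing: the current string `y` is extended to `y ++ u`, certified low by `c₁`, and then
to `y ++ u ++ v`, certified high by `c₂`. -/
def crossStep (c₁ c₂ : S × ℕ → Bool) (z : S × ((S × ℕ) × (S × ℕ))) : Option S :=
  bif c₁ (z.1 ++ z.2.1.1, z.2.1.2) && c₂ (z.1 ++ z.2.1.1 ++ z.2.2.1, z.2.2.2) then
    some (z.1 ++ z.2.1.1 ++ z.2.2.1) else none

theorem computable_crossStep {c₁ c₂ : S × ℕ → Bool} (h₁ : Computable c₁) (h₂ : Computable c₂) :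
    Computable (crossStep c₁ c₂) := by
  have hx : Computable fun z : S × ((S × ℕ) × (S × ℕ)) => z.1 ++ z.2.1.1 :=
    Computable.list_append.comp Computable.fst
      (Computable.fst.comp (Computable.fst.comp Computable.snd))
  have hy : Computable fun z : S × ((S × ℕ) × (S × ℕ)) => z.1 ++ z.2.1.1 ++ z.2.2.1 :=
    Computable.list_append.comp hx
      (Computable.fst.comp (Computable.snd.comp Computable.snd))
  refine Computable.cond (Primrec.and.to_comp.comp (h₁.comp (hx.pair ?_)) (h₂.comp (hy.pair ?_)))
    (Computable.option_some.comp hy) (Computable.const none)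
  · exact Computable.snd.comp (Computable.fst.comp Computable.snd)
  · exact Computable.snd.comp (Computable.snd.comp Computable.snd)

theorem mem_reach_crossStep_succ {c₁ c₂ : S × ℕ → Bool} {k : ℕ} {x : S} :
    x ∈ Reach (crossStep c₁ c₂) [] (k + 1) ↔
      ∃ y ∈ Reach (crossStep c₁ c₂) [] k, ∃ z, y <+: z ∧ z <+: x ∧
        (∃ t, c₁ (z, t) = true) ∧ ∃ t, c₂ (x, t) = true := by
  constructor
  · rintro ⟨y, hy, ⟨⟨u, t⟩, ⟨v, s⟩⟩, he⟩
    unfold crossStep at he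
    dsimp only at he
    cases hc : (c₁ (y ++ u, t) && c₂ (y ++ u ++ v, s)) with
    | false => rw [hc] at he; cases he
    | true =>
      rw [hc] at he
      cases he
      rw [Bool.and_eq_true] at hc
      exact ⟨y, hy, y ++ u, List.prefix_append _ _, List.prefix_append _ _, ⟨t, hc.1⟩, ⟨s, hc.2⟩⟩
  · rintro ⟨y, hy, z, ⟨u, rfl⟩, ⟨v, rfl⟩, ⟨t, ht⟩, ⟨s, hs⟩⟩
    refine ⟨y, hy, ⟨⟨u, t⟩, ⟨v, s⟩⟩, ?_⟩
    simp only [crossStep, ht, hs, Bool.and_self, cond_true]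

/-- Dubins' inequality: `k` upcrossings of the ratio from `a / d` to `b / d` have `P`-probability at
most `(a / b) ^ k`. -/
theorem measure_reach_crossStep_le {P Q : Measure Seq} [IsProbabilityMeasure P]
    [IsProbabilityMeasure Q] {a b d : ℕ} (hb : b ≠ 0) {c₁ c₂ : S × ℕ → Bool}
    (h₁ : ∀ x t, c₁ (x, t) = true → d * (Q (cyl x)).toReal ≤ a * (P (cyl x)).toReal)
    (h₂ : ∀ x t, c₂ (x, t) = true → b * (P (cyl x)).toReal ≤ d * (Q (cyl x)).toReal) (k : ℕ) :
    P (⋃ x ∈ Reach (crossStep c₁ c₂) [] k, cyl x) ≤ ((a : ℝ≥0∞) / b) ^ k := by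
  induction k with
  | zero => simpa using prob_le_one
  | succ k ih =>
    -- the strings at which the `(k + 1)`-st upcrossing has reached its low point
    set A : Set S := {z | ∃ y ∈ Reach (crossStep c₁ c₂) [] k, y <+: z ∧ ∃ t, c₁ (z, t) = true}
    have s1 : (⋃ x ∈ Reach (crossStep c₁ c₂) [] (k + 1), cyl x) ⊆ ⋃ z ∈ A, cyl z := by
      refine iUnion₂_subset fun x hx => ?_
      obtain ⟨y, hy, z, hyz, hzx, hz, -⟩ := mem_reach_crossStep_succ.1 hx
      exact (cyl_subset hzx).trans 
        (subset_biUnion_of_mem (u := cyl) (show z ∈ A from ⟨y, hy, hyz, hz⟩))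
    have s2 : (⋃ z ∈ A, cyl z) ⊆ ⋃ x ∈ Reach (crossStep c₁ c₂) [] k, cyl x := by
      refine iUnion₂_subset fun z hz => ?_
      obtain ⟨y, hy, hyz, -⟩ := hz
      exact (cyl_subset hyz).trans (subset_biUnion_of_mem (u := cyl) hy)
    have e : (b : ℝ≥0∞) * P (⋃ x ∈ Reach (crossStep c₁ c₂) [] (k + 1), cyl x) ≤
        a * ((a : ℝ≥0∞) / b) ^ k :=
      calc (b : ℝ≥0∞) * P (⋃ x ∈ Reach (crossStep c₁ c₂) [] (k + 1), cyl x)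
          ≤ d * Q (⋃ x ∈ Reach (crossStep c₁ c₂) [] (k + 1), cyl x) :=
            natCast_mul_measure_le fun x hx => by
              obtain ⟨-, -, -, -, -, -, t, ht⟩ := mem_reach_crossStep_succ.1 hx
              exact h₂ x t ht
        _ ≤ d * Q (⋃ z ∈ A, cyl z) := by gcongr
        _ ≤ a * P (⋃ z ∈ A, cyl z) := natCast_mul_measure_le fun z ⟨_, _, _, t, ht⟩ => h₁ z t ht
        _ ≤ a * ((a : ℝ≥0∞) / b) ^ k := by gcongr; exact (measure_mono s2).trans ih
    rw [pow_succ', ← ENNReal.mul_div_right_comm, ENNReal.le_div_iff_mul_le (by simp [hb]) (by simp),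
      mul_comm]
    exact e

theorem inv_two_pow_succ_lt (n : ℕ) : (2⁻¹ : ℝ≥0∞) ^ (n + 1) < 2⁻¹ ^ n := by
  rw [pow_succ]
  conv_rhs => rw [← mul_one ((2⁻¹ : ℝ≥0∞) ^ n)]
  refine (ENNReal.mul_lt_mul_iff_right (by simp) (by finiteness)).2 ?_
  simp

/-- The likelihood ratio along a random sequence does not oscillate infinitely often between values
below `a / d` and values above `b / d`. Division is avoided so that null prefixes need no care. -/
theorem Random1.no_upcrossings {P Q : Measure Seq} (hP : ComputableProb P) (hQ : ComputableProb Q)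
    {ω : Seq} (hω : Random1 P ω) {a b d : ℕ} (hab : a < b)
    (hlow : ∃ᶠ n in atTop,
      d * (Q (cyl (seqTake ω n))).toReal < a * (P (cyl (seqTake ω n))).toReal)
    (hhigh : ∃ᶠ n in atTop,
      b * (P (cyl (seqTake ω n))).toReal < d * (Q (cyl (seqTake ω n))).toReal) : False := by
  have := hP.1
  have := hQ.1
  obtain ⟨f, hf, hfs, hfc, -⟩ := exists_certificate hQ hP
  obtain ⟨g, hg, hgs, hgc, -⟩ := exists_certificate hP hQ
  set c₁ : S × ℕ → Bool := fun z => f ((d, a), z)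
  set c₂ : S × ℕ → Bool := fun z => g ((b, d), z)
  have hc₁ : Computable c₁ := hf.comp ((Computable.const _).pair Computable.id)
  have hc₂ : Computable c₂ := hg.comp ((Computable.const _).pair Computable.id)
  have hb : b ≠ 0 := by omega
  have hmeas := measure_reach_crossStep_le (P := P) (Q := Q) hb (c₁ := c₁) (c₂ := c₂)
    (fun x t h => hfs d a x t h) (fun x t h => hgs b d x t h)
  obtain ⟨m, hm⟩ : ∃ m, ((a : ℝ≥0∞) / b) ^ m < 2⁻¹ := by
    have h1 : (a : ℝ≥0∞) / b < 1 := by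
      rw [ENNReal.div_lt_iff (by simp [hb]) (by simp)]
      simpa using hab
    exact ((ENNReal.tendsto_pow_atTop_nhds_zero_of_lt_one h1).eventually
      (gt_mem_nhds (by simp))).exists
  have hmono : Antitone fun k => ⋃ x ∈ Reach (crossStep c₁ c₂) [] k, cyl x := by
    refine antitone_nat_of_succ_le fun k => iUnion₂_subset fun x hx => ?_
    obtain ⟨y, hy, z, hyz, hzx, -⟩ := mem_reach_crossStep_succ.1 hx
    exact (cyl_subset (hyz.trans hzx)).trans (subset_biUnion_of_mem (u := cyl) hy)
  set U : Set (ℕ × S) := {p | p.2 ∈ Reach (crossStep c₁ c₂) [] (m * (p.1 + 1))}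
  have hU : ∀ n, testUnion cyl U n = ⋃ x ∈ Reach (crossStep c₁ c₂) [] (m * (n + 1)), cyl x :=
    fun n => rfl
  refine hω U ⟨reSet_reach (computable_crossStep hc₁ hc₂) []
    (Primrec.nat_mul.comp (Primrec.const m) Primrec.succ).to_comp, fun n => ?_, fun n => ?_⟩ ?_
  · rw [hU, hU]
    exact hmono (Nat.mul_le_mul_left m (by omega))
  · rw [hU]
    refine (hmeas _).trans_lt (lt_of_le_of_lt ?_ (inv_two_pow_succ_lt n))
    rw [pow_mul]
    gcongr
  · have hreach : ∀ k, ∃ n, seqTake ω n ∈ Reach (crossStep c₁ c₂) [] k := by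
      intro k
      induction k with
      | zero => exact ⟨0, by simp [Reach, seqTake]⟩
      | succ k ih =>
        obtain ⟨n, hn⟩ := ih
        obtain ⟨i, hi, hi'⟩ := frequently_atTop.1 hlow n
        obtain ⟨j, hj, hj'⟩ := frequently_atTop.1 hhigh i
        exact ⟨j, mem_reach_crossStep_succ.2 ⟨_, hn, _, seqTake_prefix ω hi, seqTake_prefix ω hj,
          hfc d a _ hi', hgc b d _ hj'⟩⟩
    refine mem_iInter.2 fun n => ?_
    rw [hU]
    obtain ⟨l, hl⟩ := hreach (m * (n + 1))
    exact mem_biUnion hl (prefixSeq_seqTake ω l)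

/-- The likelihood ratio is bounded along a random sequence, by an effective form of the maximal
inequality. -/
theorem Random1.exists_bound {P Q : Measure Seq} (hP : ComputableProb P) (hQ : ComputableProb Q)
    {ω : Seq} (hω : Random1 P ω) :
    ∃ C : ℕ, ∀ n, (Q (cyl (seqTake ω n))).toReal ≤ C * (P (cyl (seqTake ω n))).toReal := by
  have := hP.1
  have := hQ.1
  obtain ⟨g, hg, hgs, hgc, hgm⟩ := exists_certificate hP hQ
  by_contra! hcon
  -- the exponent is `n + 1`, not `n`, because tests require a strict bound at every level
  set U : Set (ℕ × S) := {p | ∃ t, g ((2 ^ (p.1 + 1), 1), (p.2, t)) = true}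
  have hpow : Primrec fun n : ℕ => 2 ^ (n + 1) := by
    refine (Primrec.nat_iterate (f := fun n : ℕ => n) (g := fun _ => 2) (h := fun _ y => 2 * y)
      Primrec.id (Primrec.const 2)
      (Primrec.nat_mul.comp (Primrec.const 2) Primrec.snd)).of_eq fun n => ?_
    induction n with
    | zero => rfl
    | succ n ih => rw [Function.iterate_succ_apply', ih, pow_succ' 2 (n + 1)]
  have hRE : RESet U := by
    have hF : Computable fun z : (ℕ × S) × ℕ =>
        bif g ((2 ^ (z.1.1 + 1), 1), (z.1.2, z.2)) then some z.1 else none := by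
      refine Computable.cond (hg.comp (((hpow.to_comp.comp (Computable.fst.comp
        Computable.fst)).pair (Computable.const 1)).pair ((Computable.snd.comp
        Computable.fst).pair Computable.snd))) (Computable.option_some.comp Computable.fst)
        (Computable.const none)
    convert reSet_of_enumeration hF using 1
    ext p
    simp only [U, mem_ofPred_eq]
    constructor
    · rintro ⟨t, ht⟩
      exact ⟨(p, t), by simp [ht]⟩
    · rintro ⟨⟨p', t⟩, ht⟩
      cases hc : g ((2 ^ (p'.1 + 1), 1), (p'.2, t)) with
      | false => simp [hc] at ht
      | true =>
        obtain rfl : p' = p := by simpa [hc] using ht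
        exact ⟨t, hc⟩
  refine hω U ⟨hRE, fun n => ?_, fun n => ?_⟩ (mem_iInter.2 fun n => ?_)
  · refine biUnion_subset_biUnion_left fun x hx => ?_
    obtain ⟨t, ht⟩ := hx
    exact ⟨t, hgm _ _ _ _ _ (Nat.pow_le_pow_right two_pos (by omega)) ht⟩
  · refine lt_of_le_of_lt ?_ (inv_two_pow_succ_lt n)
    have h := natCast_mul_measure_le (μ := P) (ν := Q) (a := 2 ^ (n + 1)) (b := 1)
      (X := {x | (n, x) ∈ U}) fun x ⟨t, ht⟩ => hgs _ _ x t ht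
    rw [ENNReal.inv_pow.symm, ← one_div, ENNReal.le_div_iff_mul_le (by simp) (by simp), mul_comm]
    refine le_trans (by simpa [testUnion] using h) prob_le_one
  · obtain ⟨l, hl⟩ := hcon (2 ^ (n + 1))
    exact mem_biUnion (show seqTake ω l ∈ {x | (n, x) ∈ U} from
      hgc (2 ^ (n + 1)) 1 (seqTake ω l) (by simpa using hl))
      (prefixSeq_seqTake ω l)

/-- Corollary 2: for computable probabilities P, Q on Ω, every P-random
sequence satisfies: the likelihood ratio r(x) = Q(x)/P(x) converges to a finite limit
along its prefixes. -/
theorem likelihood_ratio_convergence (P Q : Measure Seq)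
    (hP : ComputableProb P) (hQ : ComputableProb Q) :
    {ω : Seq | Random1 P ω} ⊆
      {ω : Seq | ∃ L : ℝ, Tendsto (fun n => ratio P Q (seqTake ω n)) atTop (nhds L)} := by
  intro ω hω
  have hω : Random1 P ω := hω
  have := hP.1
  have := hQ.1
  have hnn : ∀ n, 0 ≤ ratio P Q (seqTake ω n) := fun n =>
    div_nonneg ENNReal.toReal_nonneg ENNReal.toReal_nonneg
  by_cases hpos : ∀ n, 0 < (P (cyl (seqTake ω n))).toReal
  · obtain ⟨C, hC⟩ := hω.exists_bound hP hQ
    refine tendsto_of_no_upcrossings (Rat.isDenseEmbedding_coe_real.dense) ?_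
      (isBoundedUnder_of ⟨C, fun n => (div_le_iff₀ (hpos n)).2 (hC n)⟩)
      (isBoundedUnder_of ⟨0, hnn⟩)
    rintro _ ⟨a, rfl⟩ _ ⟨b, rfl⟩ hab ⟨hlow, hhigh⟩
    have ha : 0 < a := by
      obtain ⟨n, hn⟩ := hlow.exists
      exact_mod_cast (hnn n).trans_lt hn
    have hab : a < b := by exact_mod_cast hab
    have hb : 0 < b := ha.trans hab
    -- writes `a` and `b` with natural numerators over the common denominator `a.den * b.den`
    have key : ∀ q : ℚ, 0 < q → ∀ e : ℕ,
        ((q.num.toNat * e : ℕ) : ℝ) = (q : ℝ) * (q.den * e : ℕ) := fun q hq e => by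
      have h1 : ((q.num.toNat : ℤ) : ℚ) = q * q.den := by
        rw [Int.toNat_of_nonneg (Rat.num_nonneg.2 hq.le), Rat.mul_den_eq_num]
      have h2 : ((q.num.toNat * e : ℕ) : ℚ) = q * (q.den * e : ℕ) := by
        push_cast at h1 ⊢
        rw [h1, mul_assoc]
      exact_mod_cast h2
    have ka := key a ha b.den
    have kb := key b hb a.den
    rw [mul_comm b.den a.den] at kb
    have hd : (0 : ℝ) < (a.den * b.den : ℕ) := by
      exact_mod_cast Nat.mul_pos a.den_pos b.den_pos
    refine hω.no_upcrossings hP hQ (a := a.num.toNat * b.den) (b := b.num.toNat * a.den)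
      (d := a.den * b.den) ?_ (hlow.mono fun n hn => ?_) (hhigh.mono fun n hn => ?_)
    · have : ((a.num.toNat * b.den : ℕ) : ℝ) < (b.num.toNat * a.den : ℕ) := by
        rw [ka, kb]
        gcongr
      exact_mod_cast this
    · rw [ratio, div_lt_iff₀ (hpos n)] at hn
      rw [ka]
      nlinarith
    · rw [ratio, lt_div_iff₀ (hpos n)] at hn
      rw [kb]
      nlinarith
  · push Not at hpos
    obtain ⟨n, hn⟩ := hpos
    refine ⟨0, tendsto_const_nhds.congr' ?_⟩
    filter_upwards [eventually_ge_atTop n] with m hm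
    have h0 : P (cyl (seqTake ω n)) = 0 := by
      have h := le_antisymm hn ENNReal.toReal_nonneg
      rwa [ENNReal.toReal_eq_zero_iff, or_iff_left (measure_ne_top _ _)] at h
    have h1 : P (cyl (seqTake ω m)) = 0 := measure_mono_null (cyl_subset (seqTake_prefix ω hm)) h0
    simp [ratio, h1]

end AlgRand
end

section
/- Martin-Löf's theorem on mutual singularity: for computable probabilities P and Q on (Ω,B), R^P ∩ R^Q = ∅ if and only if P and Q are mutually singular (i.e., there exist disjoint measurable sets A and B with P(A) = 1 and Q(B) = 1). -/
/-!
If `P` and `Q` have no common random sequence, then the complements of `R^P` and `R^Q` cover `Ω`.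
There are only countably many recursively enumerable sets, hence only countably many tests, so these
complements are null for `P` and for `Q` respectively (`measure_setOf_not_random`), and `P` and `Q`
are mutually singular.

Conversely, let `P` and `Q` be mutually singular. Outer regularity, followed by exhaustion of an open
set by clopen sets, gives for every `n` a clopen set of `P`-measure less than `2⁻¹ ^ n` whose
complement has `Q`-measure less than `2⁻¹ ^ n` (`exists_clop_of_mutuallySingular`). Clopen sets are
coded by natural numbers (`clop`), and the two strict inequalities can be verified from sufficiently
good approximations of the measures, so such a clopen set can be found by an unbounded search
(`exists_computable_clop`). Since `∑ 2⁻¹ ^ n` converges effectively, the unions of the tails of this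
sequence form a test for `P`, and those of the complements a test for `Q`
(`eventually_notMem_clop`). A sequence random for both measures would then lie, for all large `n`,
neither in the `n`-th clopen set nor in its complement.

Computability of a function into `ℚ` refers to the encoding from the instance `Denumerable ℚ`,
in which the code of a rational is the rank of its fraction code among all codes of reduced fractions
(`encode_rat`). Numerator and denominator are recovered from it by another unbounded search
(`computable_fracCode`), which turns the given rational approximations into upper approximations by
dyadic rationals with natural numerators (`exists_isApprox`).
-/

open MeasureTheory Filter Set
open scoped ENNReal NNReal

namespace AlgRand

/-! ### Computability of rational approximations -/

/-- Unbounded search over a decidable, everywhere solvable predicate gives a computable function. -/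
theorem exists_computable_search {α : Type} [Primcodable α] {p : α → ℕ → Bool}
    (hp : Computable₂ p) (h : ∀ a, ∃ n, p a n = true) :
    ∃ f : α → ℕ, Computable f ∧ ∀ a, p a (f a) = true := by
  have hpart : Partrec fun a => Nat.rfind fun n => (p a n : Part Bool) :=
    Partrec.rfind hp.partrec₂
  have hdom : ∀ a, (Nat.rfind fun n => (p a n : Part Bool)).Dom := fun a => by
    obtain ⟨n, hn⟩ := h a
    exact Nat.rfind_dom.2 ⟨n, by simpa using hn, fun _ => trivial⟩
  refine ⟨fun a => (Nat.rfind fun n => (p a n : Part Bool)).get (hdom a),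
    hpart.of_eq_tot fun a => Part.get_mem _, fun a => ?_⟩
  simpa using Nat.rfind_spec (Part.get_mem (hdom a))

/-- The fraction code of a rational: the pair of the code of the numerator and the denominator. -/
def fracCode (q : ℚ) : ℕ := Nat.pair (Encodable.encode q.num) q.den

/-- The codes of fractions in lowest terms. The code of an integer `z` is `2 z` or `-2 z - 1`, so
`|z|` is half the code, rounded up. -/
def IsFrac (m : ℕ) : Prop := 0 < m.unpair.2 ∧ Nat.Coprime ((m.unpair.1 + 1) / 2) m.unpair.2

instance : DecidablePred IsFrac := fun _ => inferInstanceAs (Decidable (_ ∧ _))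

theorem encode_natCast (n : ℕ) : Encodable.encode (n : ℤ) = 2 * n := rfl

theorem encode_negSucc (n : ℕ) : Encodable.encode (Int.negSucc n) = 2 * n + 1 := rfl

/-- `IsFrac` describes the range of the structural encoding `Rat.instEncodable`, which is the encoding
by `fracCode`. -/
theorem isFrac_iff (m : ℕ) : IsFrac m ↔ m ∈ Set.range (@Encodable.encode ℚ Rat.instEncodable) := by
  constructor
  · rintro ⟨h1, h2⟩
    obtain ⟨z, hz⟩ : ∃ z : ℤ, Encodable.encode z = m.unpair.1 :=
      ⟨Denumerable.ofNat ℤ m.unpair.1, Denumerable.encode_ofNat _⟩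
    have hab : z.natAbs = (m.unpair.1 + 1) / 2 := by
      rw [← hz]
      cases z with
      | ofNat n =>
        have := encode_natCast n
        simp only [Int.ofNat_eq_natCast, Int.natAbs_natCast] at *
        omega
      | negSucc n =>
        have := encode_negSucc n
        simp only [Int.natAbs_negSucc] at *
        omega
    refine ⟨⟨z, m.unpair.2, h1.ne', by rwa [hab]⟩, ?_⟩
    change Nat.pair (Encodable.encode z) m.unpair.2 = m
    rw [hz, Nat.pair_unpair]
  · rintro ⟨q, rfl⟩
    change IsFrac (Nat.pair (Encodable.encode q.num) q.den)
    have hred := q.reduced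
    have hab : q.num.natAbs = (Encodable.encode q.num + 1) / 2 := by
      cases q.num with
      | ofNat n =>
        have := encode_natCast n
        simp only [Int.ofNat_eq_natCast, Int.natAbs_natCast] at *
        omega
      | negSucc n =>
        have := encode_negSucc n
        simp only [Int.natAbs_negSucc] at *
        omega
    refine ⟨?_, ?_⟩
    · simpa using q.den_pos
    · simpa [← hab] using hred

/-- The code of `q` attached to the instance `Denumerable ℚ` is the rank of its fraction code among
all codes of reduced fractions. -/
theorem encode_rat_s9 (q : ℚ) :
    @Encodable.encode ℚ Primcodable.toEncodable q =
      ((List.range (fracCode q)).filter (fun m => decide (IsFrac m))).length := by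
  rw [← List.countP_eq_length_filter]
  refine Eq.trans (b := @List.countP ℕ (fun m => @decide (m ∈ Set.range
    (@Encodable.encode ℚ Rat.instEncodable)) (Encodable.decidableRangeEncode ℚ m))
    (List.range (fracCode q))) rfl ?_
  refine List.countP_congr fun m _ => ?_
  simp [isFrac_iff]

theorem primrecPred_isFrac : PrimrecPred IsFrac := by
  have h1 : PrimrecPred fun m : ℕ => 0 < m.unpair.2 :=
    Primrec.nat_lt.comp (Primrec.const 0) (Primrec.snd.comp Primrec.unpair)
  have hR : PrimrecRel fun e m : ℕ =>
      ((m.unpair.1 + 1) / 2) % e = 0 → m.unpair.2 % e = 0 → e = 1 := by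
    have ha : Primrec fun p : ℕ × ℕ => ((p.2.unpair.1 + 1) / 2) % p.1 :=
      Primrec.nat_mod.comp (Primrec.nat_div.comp (Primrec.succ.comp
        (Primrec.fst.comp (Primrec.unpair.comp Primrec.snd))) (Primrec.const 2)) Primrec.fst
    have hb : Primrec fun p : ℕ × ℕ => p.2.unpair.2 % p.1 :=
      Primrec.nat_mod.comp (Primrec.snd.comp (Primrec.unpair.comp Primrec.snd)) Primrec.fst
    have h0 := (Primrec.eq (α := ℕ)).comp ha (Primrec.const 0)
    have h0' := (Primrec.eq (α := ℕ)).comp hb (Primrec.const 0)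
    have h1' := (Primrec.eq (α := ℕ)).comp (Primrec.fst (α := ℕ) (β := ℕ)) (Primrec.const 1)
    refine ((h0.not.or (h0'.not.or h1')).of_eq fun p => ?_)
    tauto
  have h2 : PrimrecPred fun m : ℕ => ∀ e < m.unpair.2 + 1,
      ((m.unpair.1 + 1) / 2) % e = 0 → m.unpair.2 % e = 0 → e = 1 :=
    hR.forall_lt.comp (Primrec.succ.comp (Primrec.snd.comp Primrec.unpair)) Primrec.id
  refine (h1.and h2).of_eq fun m => and_congr_right fun hpos => ?_
  constructor
  · intro h
    refine Nat.coprime_of_dvd' fun e _ he1 he2 => ?_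
    rw [h e (Nat.lt_succ_of_le (Nat.le_of_dvd hpos he2)) (Nat.mod_eq_zero_of_dvd he1)
      (Nat.mod_eq_zero_of_dvd he2)]
  · intro h e _ he1 he2
    exact Nat.eq_one_of_dvd_coprimes h (Nat.dvd_of_mod_eq_zero he1) (Nat.dvd_of_mod_eq_zero he2)

theorem isFrac_fracCode (q : ℚ) : IsFrac (fracCode q) := (isFrac_iff _).2 ⟨q, rfl⟩

/-- The fraction code of `q` is the only fraction code whose rank is the code of `q`, so it is found
by search. -/
theorem computable_fracCode : Computable fracCode := by
  have hcnt : Primrec fun m : ℕ => ((List.range m).filter (fun m => decide (IsFrac m))).length :=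
    Primrec.list_length.comp ((Primrec.listFilter primrecPred_isFrac).comp Primrec.list_range)
  have hrel : PrimrecPred fun p : ℚ × ℕ => IsFrac p.2 ∧
      @Encodable.encode ℚ Primcodable.toEncodable p.1 =
        ((List.range p.2).filter (fun m => decide (IsFrac m))).length :=
    (primrecPred_isFrac.comp Primrec.snd).and ((Primrec.eq (α := ℕ)).comp
      (Primrec.encode.comp Primrec.fst) (hcnt.comp Primrec.snd))
  obtain ⟨f, hf, hf'⟩ := exists_computable_search (α := ℚ)
    (p := fun q m => decide (IsFrac m ∧ @Encodable.encode ℚ Primcodable.toEncodable q =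
      ((List.range m).filter (fun m => decide (IsFrac m))).length))
    (Computable₂.mk (PrimrecPred.decide hrel).to_comp)
    (fun q => ⟨fracCode q, by simpa only [decide_eq_true_eq] using ⟨isFrac_fracCode q, encode_rat_s9 q⟩⟩)
  refine hf.of_eq fun q => ?_
  have := hf' q
  simp only [decide_eq_true_eq] at this
  obtain ⟨h1, h2⟩ := this
  obtain ⟨q', hq'⟩ := (isFrac_iff _).1 h1
  change fracCode q' = f q at hq'
  rw [← hq'] at h2 ⊢
  rw [← encode_rat_s9] at h2
  rw [@Encodable.encode_injective ℚ Primcodable.toEncodable _ _ h2]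

theorem primrec_pow : Primrec₂ ((· ^ ·) : ℕ → ℕ → ℕ) := Primrec₂.unpaired'.1 Nat.Primrec.pow

/-- Computable upper approximations of a computable measure by dyadic rationals `a (x, k) / 2 ^ k`
with error at most `3 / 2 ^ k`. -/
def IsApprox (P : Measure Seq) (a : S × ℕ → ℕ) : Prop :=
  Computable a ∧ ∀ x k, P.real (cyl x) * 2 ^ k ≤ a (x, k) ∧ (a (x, k) : ℝ) ≤ P.real (cyl x) * 2 ^ k + 3

theorem exists_isApprox {P : Measure Seq} (hP : ComputableProb P) : ∃ a, IsApprox P a := by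
  obtain ⟨_, p, hp, hpx⟩ := hP
  have hpw : Primrec fun x : S × ℕ => 2 ^ x.2 := primrec_pow.comp (Primrec.const 2) Primrec.snd
  have hq : Computable fun x : S × ℕ => (fracCode (p (x.1, 2 ^ x.2))).unpair :=
    Computable.unpair.comp (computable_fracCode.comp
      (hp.comp (Computable.fst.pair hpw.to_comp)))
  have hg : Primrec fun y : (ℕ × ℕ) × ℕ =>
      (if y.1.1 % 2 = 0 then y.1.1 / 2 else 0) * y.2 / y.1.2 + 2 := by
    have hfst : Primrec fun y : (ℕ × ℕ) × ℕ => y.1.1 := Primrec.fst.comp Primrec.fst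
    refine Primrec.nat_add.comp (Primrec.nat_div.comp (Primrec.nat_mul.comp (Primrec.ite
      ((Primrec.eq (α := ℕ)).comp (Primrec.nat_mod.comp hfst (Primrec.const 2)) (Primrec.const 0))
      (Primrec.nat_div.comp hfst (Primrec.const 2)) (Primrec.const 0)) Primrec.snd)
      (Primrec.snd.comp Primrec.fst)) (Primrec.const 2)
  refine ⟨_, hg.to_comp.comp (hq.pair hpw.to_comp), fun x k => ?_⟩
  set q := p (x, 2 ^ k) with hqdef
  have hnum : (if (Encodable.encode q.num) % 2 = 0 then (Encodable.encode q.num) / 2 else 0)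
      = q.num.toNat := by
    cases q.num with
    | ofNat n =>
      have := encode_natCast n
      simp only [Int.ofNat_eq_natCast, Int.toNat_natCast] at *
      split_ifs <;> omega
    | negSucc n =>
      have := encode_negSucc n
      simp only [Int.toNat_negSucc] at *
      split_ifs <;> omega
  have hk : (0 : ℝ) < 2 ^ k := by positivity
  have happ := hpx x (2 ^ k) (by positivity)
  rw [← hqdef] at happ
  push_cast at happ
  simp only [fracCode, Nat.unpair_pair, hnum]
  change P.real (cyl x) * 2 ^ k ≤ _ ∧ _
  change |P.real (cyl x) - _| < _ at happ
  have hden : (0 : ℝ) < q.den := by exact_mod_cast q.den_pos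
  set N := q.num.toNat * 2 ^ k / q.den with hN
  -- `r` is the positive part of `q`
  set r : ℝ := (q.num.toNat : ℝ) / q.den with hr
  have hqr : (q : ℝ) = (q.num : ℝ) / q.den := Rat.cast_def q
  have hle : (q : ℝ) ≤ r := by
    rw [hqr, hr]
    gcongr
    exact_mod_cast Int.self_le_toNat q.num
  have hP0 : 0 ≤ P.real (cyl x) := measureReal_nonneg
  rw [abs_lt, lt_div_iff₀ hk, neg_lt, lt_div_iff₀ hk] at happ
  have hr1 : r * 2 ^ k ≤ P.real (cyl x) * 2 ^ k + 1 := by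
    rcases le_total 0 q.num with h | h
    · have : r = q := by
        rw [hqr, hr]
        congr 1
        exact_mod_cast Int.toNat_of_nonneg h
      rw [this]; nlinarith
    · have : r = 0 := by rw [hr, Int.toNat_of_nonpos h]; simp
      rw [this]; nlinarith
  have hNle : (N : ℝ) ≤ r * 2 ^ k := by
    have : (N : ℝ) ≤ ((q.num.toNat * 2 ^ k : ℕ) : ℝ) / q.den := Nat.cast_div_le
    refine this.trans (le_of_eq ?_)
    rw [hr]; push_cast; ring
  have hNlt : r * 2 ^ k < N + 1 := by
    have h1 := Nat.lt_div_mul_add (a := q.num.toNat * 2 ^ k) q.den_pos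
    have h2 : ((q.num.toNat : ℝ) * 2 ^ k) < N * q.den + q.den := by exact_mod_cast h1
    rw [hr, div_mul_eq_mul_div, div_lt_iff₀ hden]
    linarith
  push_cast
  constructor
  · nlinarith
  · linarith

/-! ### Clopen sets coded by natural numbers -/

/-- The `ℓ` lowest binary digits of `j`, as a string. -/
def bits (ℓ j : ℕ) : S := (List.range ℓ).map fun i => j.testBit i

/-- The number whose binary digits are the first `ℓ` bits of `ω`. -/
def code (ℓ : ℕ) (ω : Seq) : ℕ := Nat.ofBits fun i : Fin ℓ => ω i

/-- The number `c` is read as the set of strings of length `ℓ` whose code is the index of a nonzero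
binary digit of `c`. The set `clop ℓ c true` is the clopen set covered by these strings, and
`clop ℓ c false` is its complement. -/
def clop (ℓ c : ℕ) (b : Bool) : Set Seq := {ω | c.testBit (code ℓ ω) = b}

theorem code_lt (ℓ : ℕ) (ω : Seq) : code ℓ ω < 2 ^ ℓ := Nat.ofBits_lt_two_pow _

theorem mem_cyl_bits (ℓ j : ℕ) (ω : Seq) : ω ∈ cyl (bits ℓ j) ↔ ∀ i < ℓ, j.testBit i = ω i := by
  simp only [cyl, PrefixSeq, bits, mem_ofPred_eq]
  constructor
  · intro h i hi
    simpa using h ⟨i, by simpa using hi⟩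
  · rintro h ⟨i, hi⟩
    simpa using h i (by simpa using hi)

theorem mem_cyl_bits_iff_code {ℓ j : ℕ} (hj : j < 2 ^ ℓ) (ω : Seq) :
    ω ∈ cyl (bits ℓ j) ↔ code ℓ ω = j := by
  rw [mem_cyl_bits]
  constructor
  · intro h
    have : (fun i : Fin ℓ => ω i) = fun i : Fin ℓ => j.testBit i :=
      funext fun i => (h i i.2).symm
    rw [code, this, Nat.ofBits_testBit, Nat.mod_eq_of_lt hj]
  · rintro rfl i hi
    rw [code, Nat.testBit_ofBits_lt _ _ hi]

theorem clop_eq (ℓ c : ℕ) (b : Bool) :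
    clop ℓ c b = ⋃ j ∈ (Finset.range (2 ^ ℓ)).filter (fun j => c.testBit j = b), cyl (bits ℓ j) := by
  ext ω
  simp only [clop, mem_ofPred_eq, mem_iUnion, Finset.mem_filter, Finset.mem_range, exists_prop]
  constructor
  · intro h
    exact ⟨_, ⟨code_lt ℓ ω, h⟩, (mem_cyl_bits_iff_code (code_lt ℓ ω) ω).2 rfl⟩
  · rintro ⟨j, ⟨hj, h⟩, hω⟩
    rwa [(mem_cyl_bits_iff_code hj ω).1 hω]

theorem measurableSet_clop (ℓ c : ℕ) (b : Bool) : MeasurableSet (clop ℓ c b) := by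
  rw [clop_eq]
  exact Finset.measurableSet_biUnion _ fun _ _ => measurableSet_cyl _

theorem measureReal_clop (P : Measure Seq) [IsProbabilityMeasure P] (ℓ c : ℕ) (b : Bool) :
    P.real (clop ℓ c b) =
      ∑ j ∈ Finset.range (2 ^ ℓ), if c.testBit j = b then P.real (cyl (bits ℓ j)) else 0 := by
  rw [clop_eq, measureReal_biUnion_finset, Finset.sum_filter]
  · intro i hi j hj hij
    refine Set.disjoint_left.2 fun ω hωi hωj => hij ?_
    simp only [Finset.coe_filter, Finset.mem_range, mem_ofPred_eq] at hi hj
    rw [← (mem_cyl_bits_iff_code hi.1 ω).1 hωi, (mem_cyl_bits_iff_code hj.1 ω).1 hωj]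
  · exact fun _ _ => measurableSet_cyl _

/-! ### Effective upper bounds for the measure of a clopen set -/

/-- The upper approximation of `2 ^ k` times the measure of `clop ℓ c b` given by `a`. -/
def weight (a : S × ℕ → ℕ) (b : Bool) (ℓ c k : ℕ) : ℕ :=
  ∑ j ∈ Finset.range (2 ^ ℓ), if c.testBit j = b then a (bits ℓ j, k) else 0

theorem computable_two_pow {α : Type} [Primcodable α] {f : α → ℕ} (hf : Computable f) :
    Computable fun a => 2 ^ f a :=
  primrec_pow.to_comp.comp (Computable.const 2) hf

theorem computable_decide_lt {α : Type} [Primcodable α] {f g : α → ℕ} (hf : Computable f)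
    (hg : Computable g) : Computable fun a => decide (f a < g a) := by
  have h : Primrec fun p : ℕ × ℕ => decide (p.1 < p.2) := PrimrecPred.decide Primrec.nat_lt
  exact h.to_comp.comp (hf.pair hg)

theorem computable_and {α : Type} [Primcodable α] {f g : α → Bool} (hf : Computable f)
    (hg : Computable g) : Computable fun a => f a && g a :=
  (Primrec.dom_bool₂ and).to_comp.comp hf hg

theorem primrec_testBit : Primrec₂ Nat.testBit := by
  have h : PrimrecPred fun p : ℕ × ℕ => p.1 / 2 ^ p.2 % 2 = 1 :=
    (Primrec.eq (α := ℕ)).comp (Primrec.nat_mod.comp (Primrec.nat_div.comp Primrec.fst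
      (primrec_pow.comp (Primrec.const 2) Primrec.snd)) (Primrec.const 2)) (Primrec.const 1)
  exact h.decide.of_eq fun p => (Nat.testBit_eq_decide_div_mod_eq).symm

theorem primrec_bits : Primrec₂ bits :=
  Primrec.list_map (Primrec.list_range.comp Primrec.fst)
    (primrec_testBit.comp (Primrec.snd.comp Primrec.fst) Primrec.snd)

theorem computable_weight {a : S × ℕ → ℕ} (ha : Computable a) (b : Bool) :
    Computable fun p : ℕ × ℕ × ℕ => weight a b p.1 p.2.1 p.2.2 := by
  have hstep : Computable fun y : (ℕ × ℕ × ℕ) × ℕ × ℕ =>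
      y.2.2 + bif (y.1.2.1.testBit y.2.1 == b) then a (bits y.1.1 y.2.1, y.1.2.2) else 0 := by
    have hj : Primrec fun y : (ℕ × ℕ × ℕ) × ℕ × ℕ => y.2.1 := Primrec.fst.comp Primrec.snd
    have hc : Primrec fun y : (ℕ × ℕ × ℕ) × ℕ × ℕ => y.1.2.1 :=
      Primrec.fst.comp (Primrec.snd.comp Primrec.fst)
    have hl : Primrec fun y : (ℕ × ℕ × ℕ) × ℕ × ℕ => y.1.1 := Primrec.fst.comp Primrec.fst
    have hk : Primrec fun y : (ℕ × ℕ × ℕ) × ℕ × ℕ => y.1.2.2 :=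
      Primrec.snd.comp (Primrec.snd.comp Primrec.fst)
    have hs : Primrec fun y : (ℕ × ℕ × ℕ) × ℕ × ℕ => y.2.2 := Primrec.snd.comp Primrec.snd
    exact Primrec.nat_add.to_comp.comp hs.to_comp (Computable.cond
      ((Primrec.dom_bool (· == b)).comp (primrec_testBit.comp hc hj)).to_comp
      (ha.comp ((primrec_bits.comp hl hj).to_comp.pair hk.to_comp)) (Computable.const 0))
  refine (Computable.nat_rec (f := fun p : ℕ × ℕ × ℕ => 2 ^ p.1) (g := fun _ => 0)
    (h := fun p y => y.2 + bif (p.2.1.testBit y.1 == b) then a (bits p.1 y.1, p.2.2) else 0)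
    (primrec_pow.comp (Primrec.const 2) Primrec.fst).to_comp (Computable.const 0)
    hstep.to₂).of_eq fun p => ?_
  rw [weight]
  induction 2 ^ p.1 with
  | zero => simp
  | succ n ih =>
    rw [Finset.sum_range_succ, ← ih]
    simp [cond_eq_ite]

theorem le_weight {P : Measure Seq} [IsProbabilityMeasure P] {a : S × ℕ → ℕ} (ha : IsApprox P a)
    (b : Bool) (ℓ c k : ℕ) : P.real (clop ℓ c b) * 2 ^ k ≤ weight a b ℓ c k := by
  rw [measureReal_clop, weight, Finset.sum_mul]
  push_cast
  refine Finset.sum_le_sum fun j _ => ?_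
  split_ifs
  · exact (ha.2 _ _).1
  · simp

theorem weight_le {P : Measure Seq} [IsProbabilityMeasure P] {a : S × ℕ → ℕ} (ha : IsApprox P a)
    (b : Bool) (ℓ c k : ℕ) :
    (weight a b ℓ c k : ℝ) ≤ P.real (clop ℓ c b) * 2 ^ k + 2 ^ ℓ * 3 := by
  have h3 : (2 ^ ℓ * 3 : ℝ) = ∑ j ∈ Finset.range (2 ^ ℓ), (3 : ℝ) := by simp
  rw [measureReal_clop, weight, Finset.sum_mul, h3, ← Finset.sum_add_distrib]
  push_cast
  refine Finset.sum_le_sum fun j _ => ?_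
  split_ifs
  · exact (ha.2 _ _).2
  · simp

theorem measure_clop_le_of_weight {P : Measure Seq} [IsProbabilityMeasure P] {a : S × ℕ → ℕ}
    (ha : IsApprox P a) {b : Bool} {ℓ c k n : ℕ} (h : weight a b ℓ c k * 2 ^ n < 2 ^ k) :
    P (clop ℓ c b) ≤ (2⁻¹ : ℝ≥0∞) ^ n := by
  have h1 := le_weight ha b ℓ c k
  have h2 : (weight a b ℓ c k : ℝ) * 2 ^ n < 2 ^ k := by exact_mod_cast h
  have hk : (0 : ℝ) < 2 ^ k := by positivity
  have hn : (0 : ℝ) < 2 ^ n := by positivity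
  have h3 : P.real (clop ℓ c b) ≤ (2⁻¹ : ℝ) ^ n := by
    rw [inv_pow, ← one_div, le_div_iff₀ hn]
    have : P.real (clop ℓ c b) * 2 ^ n * 2 ^ k ≤ 1 * 2 ^ k := by nlinarith
    exact le_of_mul_le_mul_right this hk
  rw [← ofReal_measureReal]
  refine (ENNReal.ofReal_le_ofReal h3).trans (le_of_eq ?_)
  rw [ENNReal.ofReal_pow (by norm_num), ENNReal.ofReal_inv_of_pos (by norm_num)]
  simp

/-- Together with `measure_clop_le_of_weight`, this allows small clopen sets to be found by
search: a strict bound is confirmed at every sufficiently high precision. -/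
theorem eventually_weight_lt {P : Measure Seq} [IsProbabilityMeasure P] {a : S × ℕ → ℕ}
    (ha : IsApprox P a) {b : Bool} {ℓ c n : ℕ} (h : P (clop ℓ c b) < (2⁻¹ : ℝ≥0∞) ^ n) :
    ∀ᶠ k in atTop, weight a b ℓ c k * 2 ^ n < 2 ^ k := by
  have h1 : P.real (clop ℓ c b) < (2⁻¹ : ℝ) ^ n := by
    have := (ENNReal.toReal_lt_toReal (measure_ne_top _ _) (by simp)).2 h
    simpa [measureReal_def] using this
  have hn : (0 : ℝ) < 2 ^ n := by positivity
  have hδ : 0 < 1 - P.real (clop ℓ c b) * 2 ^ n := by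
    rw [inv_pow, ← one_div, lt_div_iff₀ hn] at h1
    linarith
  have hlim : Tendsto (fun k : ℕ => (2 : ℝ) ^ k) atTop atTop :=
    tendsto_pow_atTop_atTop_of_one_lt one_lt_two
  filter_upwards [hlim.eventually_gt_atTop (2 ^ ℓ * 3 * 2 ^ n / (1 - P.real (clop ℓ c b) * 2 ^ n))]
    with k hk
  rw [div_lt_iff₀ hδ] at hk
  have h2 := weight_le ha b ℓ c k
  have : (weight a b ℓ c k : ℝ) * 2 ^ n < 2 ^ k := by nlinarith
  exact_mod_cast this

/-! ### Clopen separation of singular measures -/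

/-- The sequences whose cylinder of length `ℓ` is contained in `U`. -/
def openCore (U : Set Seq) (ℓ : ℕ) : Set Seq := {ω | ∀ ω' : Seq, (∀ i < ℓ, ω' i = ω i) → ω' ∈ U}

theorem openCore_mono (U : Set Seq) : Monotone (openCore U) :=
  fun _ _ h _ hω ω' hω' => hω ω' fun i hi => hω' i (hi.trans_le h)

theorem iUnion_openCore {U : Set Seq} (hU : IsOpen U) : ⋃ ℓ, openCore U ℓ = U := by
  refine Subset.antisymm (iUnion_subset fun ℓ ω hω => hω ω fun _ _ => rfl) fun ω hω => ?_
  obtain ⟨I, u, hu, hsub⟩ := isOpen_pi_iff.1 hU ω hω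
  refine mem_iUnion.2 ⟨I.sup id + 1, fun ω' hω' => hsub fun i hi => ?_⟩
  rw [hω' i (Nat.lt_succ_of_le (Finset.le_sup (f := id) hi))]
  exact (hu i hi).2

theorem exists_clop_eq_openCore (U : Set Seq) (ℓ : ℕ) :
    ∃ c, clop ℓ c true = openCore U ℓ ∧ clop ℓ c false = (openCore U ℓ)ᶜ := by
  classical
  have key : clop ℓ (Nat.ofBits fun j : Fin (2 ^ ℓ) => decide (cyl (bits ℓ j) ⊆ U)) true =
      openCore U ℓ := by
    ext ω
    simp only [clop, mem_ofPred_eq]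
    rw [Nat.testBit_ofBits_lt _ _ (code_lt ℓ ω), decide_eq_true_eq]
    have hmem : ∀ ω', ω' ∈ cyl (bits ℓ (code ℓ ω)) ↔ ∀ i < ℓ, ω' i = ω i := fun ω' => by
      rw [mem_cyl_bits]
      refine forall₂_congr fun i hi => ?_
      rw [code, Nat.testBit_ofBits_lt _ _ hi, eq_comm]
    simp only [Set.subset_def, hmem]
    rfl
  refine ⟨_, key, ?_⟩
  rw [← key]
  ext ω
  simp [clop]

theorem exists_clop_of_mutuallySingular {P Q : Measure Seq} [IsProbabilityMeasure P]
    [IsProbabilityMeasure Q] (h : Measure.MutuallySingular P Q) {ε : ℝ≥0∞} (hε : 0 < ε) :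
    ∃ ℓ c, P (clop ℓ c true) < ε ∧ Q (clop ℓ c false) < ε := by
  obtain ⟨A, -, hPA, hQA⟩ := h
  obtain ⟨U, hAU, hU, hPU⟩ := A.exists_isOpen_lt_of_lt (μ := P) ε (by rwa [hPA])
  have hQU : Q (⋂ ℓ, (openCore U ℓ)ᶜ) = 0 := by
    rw [← compl_iUnion, iUnion_openCore hU]
    exact measure_mono_null (compl_subset_compl.2 hAU) hQA
  have hlim := tendsto_measure_iInter_atTop (μ := Q) (s := fun ℓ => (openCore U ℓ)ᶜ)
    (fun ℓ => by
      obtain ⟨c, -, hc⟩ := exists_clop_eq_openCore U ℓ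
      rw [← hc]
      exact (measurableSet_clop _ _ _).nullMeasurableSet)
    (fun i j hij => compl_subset_compl.2 (openCore_mono U hij)) ⟨0, measure_ne_top _ _⟩
  rw [hQU] at hlim
  obtain ⟨ℓ, hℓ⟩ := (hlim.eventually_lt_const hε).exists
  obtain ⟨c, hc1, hc2⟩ := exists_clop_eq_openCore U ℓ
  refine ⟨ℓ, c, ?_, by rwa [hc2]⟩
  rw [hc1]
  refine (measure_mono ?_).trans_lt hPU
  exact (subset_iUnion _ ℓ).trans (iUnion_openCore hU).subset

/-- The test that the approximation `a` bounds the measure of `clop ℓ c b` by `2⁻¹ ^ n` at precision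
`k`, where `t` is the code of the triple `(ℓ, c, k)`. -/
def check (a : S × ℕ → ℕ) (b : Bool) (n t : ℕ) : Bool :=
  decide (weight a b t.unpair.1 t.unpair.2.unpair.1 t.unpair.2.unpair.2 * 2 ^ n
    < 2 ^ t.unpair.2.unpair.2)

theorem computable_check_aux {a : S × ℕ → ℕ} (ha : Computable a) (b : Bool) :
    Computable fun q : ℕ × ℕ × ℕ × ℕ =>
      decide (weight a b q.2.1 q.2.2.1 q.2.2.2 * 2 ^ q.1 < 2 ^ q.2.2.2) := by
  have hw : Computable fun q : ℕ × ℕ × ℕ × ℕ => weight a b q.2.1 q.2.2.1 q.2.2.2 :=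
    (computable_weight ha b).comp Computable.snd
  have hn : Computable fun q : ℕ × ℕ × ℕ × ℕ => 2 ^ q.1 := computable_two_pow Computable.fst
  have hk : Computable fun q : ℕ × ℕ × ℕ × ℕ => 2 ^ q.2.2.2 :=
    computable_two_pow (Computable.snd.comp (Computable.snd.comp Computable.snd))
  have hwn : Computable fun q : ℕ × ℕ × ℕ × ℕ => weight a b q.2.1 q.2.2.1 q.2.2.2 * 2 ^ q.1 :=
    Primrec.nat_mul.to_comp.comp hw hn
  exact computable_decide_lt hwn hk

theorem primrec_triple : Primrec fun t : ℕ =>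
    (t.unpair.1, t.unpair.2.unpair.1, t.unpair.2.unpair.2) := by
  have h3 : Primrec fun t : ℕ => t.unpair.2.unpair :=
    Primrec.unpair.comp (Primrec.snd.comp Primrec.unpair)
  exact (Primrec.fst.comp Primrec.unpair).pair ((Primrec.fst.comp h3).pair (Primrec.snd.comp h3))

theorem computable_check {a : S × ℕ → ℕ} (ha : Computable a) (b : Bool) :
    Computable fun p : ℕ × ℕ => check a b p.1 p.2 := by
  have := (computable_check_aux ha b).comp
    (Computable.fst.pair (primrec_triple.to_comp.comp Computable.snd))
  simp only [check]
  exact this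

/-- Singular computable measures are separated by a computable sequence of clopen sets: these are
found by searching for one whose two measures are verified to be small. -/
theorem exists_computable_clop {P Q : Measure Seq} (hP : ComputableProb P) (hQ : ComputableProb Q)
    (h : Measure.MutuallySingular P Q) :
    ∃ ℓ c : ℕ → ℕ, Computable ℓ ∧ Computable c ∧
      (∀ n, P (clop (ℓ n) (c n) true) ≤ (2⁻¹ : ℝ≥0∞) ^ n) ∧
      ∀ n, Q (clop (ℓ n) (c n) false) ≤ (2⁻¹ : ℝ≥0∞) ^ n := by
  have := hP.1
  have := hQ.1
  obtain ⟨a, ha⟩ := exists_isApprox hP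
  obtain ⟨a', ha'⟩ := exists_isApprox hQ
  obtain ⟨f, hf, hfs⟩ := exists_computable_search (p := fun n t =>
      check a true n t && check a' false n t)
    (Computable₂.mk (computable_and (computable_check ha.1 true) (computable_check ha'.1 false)))
    (fun n => by
      obtain ⟨ℓ, c, h1, h2⟩ := exists_clop_of_mutuallySingular h
        (ε := (2⁻¹ : ℝ≥0∞) ^ n) (ENNReal.pow_pos (by simp) n)
      obtain ⟨k, hk1, hk2⟩ :=
        ((eventually_weight_lt ha h1).and (eventually_weight_lt ha' h2)).exists
      exact ⟨Nat.pair ℓ (Nat.pair c k), by simpa [check] using ⟨hk1, hk2⟩⟩)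
  simp only [Bool.and_eq_true, check, decide_eq_true_eq] at hfs
  have hu : Computable fun n => (f n).unpair := Computable.unpair.comp hf
  exact ⟨fun n => (f n).unpair.1, fun n => (f n).unpair.2.unpair.1, Computable.fst.comp hu,
    Computable.fst.comp (Computable.unpair.comp (Computable.snd.comp hu)),
    fun n => measure_clop_le_of_weight ha (hfs n).1,
    fun n => measure_clop_le_of_weight ha' (hfs n).2⟩

/-! ### Martin-Löf tests -/

/-- An effective Borel–Cantelli lemma: the clopen sets of index at least `n + 2` form the level `n`
of a test, so a random sequence belongs to only finitely many of them. -/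
theorem eventually_notMem_clop {P : Measure Seq} {ℓ c : ℕ → ℕ} (hℓ : Computable ℓ)
    (hc : Computable c) (b : Bool) (hle : ∀ n, P (clop (ℓ n) (c n) b) ≤ (2⁻¹ : ℝ≥0∞) ^ n)
    {ω : Seq} (hω : Random1 P ω) : ∃ n, ∀ i, ω ∉ clop (ℓ (n + 2 + i)) (c (n + 2 + i)) b := by
  -- the code `t` stands for the triple of a level `n`, an index `n + 2 + i` and a string code `j`
  set f : ℕ → Option (ℕ × S) := fun t =>
    let n := t.unpair.1
    let m := n + 2 + t.unpair.2.unpair.1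
    let j := t.unpair.2.unpair.2
    bif (decide (j < 2 ^ ℓ m) && ((c m).testBit j == b)) then some (n, bits (ℓ m) j) else none
    with hfdef
  have hf : Computable f := by
    have hu : Primrec fun t : ℕ => t.unpair.2.unpair :=
      Primrec.unpair.comp (Primrec.snd.comp Primrec.unpair)
    have hn : Primrec fun t : ℕ => t.unpair.1 := Primrec.fst.comp Primrec.unpair
    have hj : Primrec fun t : ℕ => t.unpair.2.unpair.2 := Primrec.snd.comp hu
    have hm : Primrec fun t : ℕ => t.unpair.1 + 2 + t.unpair.2.unpair.1 :=
      Primrec.nat_add.comp (Primrec.nat_add.comp hn (Primrec.const 2)) (Primrec.fst.comp hu)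
    have hlm := hℓ.comp hm.to_comp
    refine Computable.cond (computable_and
      (computable_decide_lt hj.to_comp (computable_two_pow hlm))
      ((Primrec.dom_bool (· == b)).to_comp.comp
        (primrec_testBit.to_comp.comp (hc.comp hm.to_comp) hj.to_comp)))
      (Computable.option_some.comp (hn.to_comp.pair (primrec_bits.to_comp.comp hlm hj.to_comp)))
      (Computable.const none)
  set U : Set (ℕ × S) := {a | ∃ t, f t = some a} with hU
  have hmem : ∀ n x, (n, x) ∈ U ↔ ∃ i j, j < 2 ^ ℓ (n + 2 + i) ∧
      (c (n + 2 + i)).testBit j = b ∧ bits (ℓ (n + 2 + i)) j = x := by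
    intro n x
    constructor
    · rintro ⟨t, ht⟩
      simp only [hfdef, cond_eq_ite, Bool.and_eq_true, decide_eq_true_eq, beq_iff_eq,
        Option.ite_none_right_eq_some, Option.some.injEq, Prod.mk.injEq] at ht
      obtain ⟨⟨h1, h2⟩, rfl, h3⟩ := ht
      exact ⟨_, _, h1, h2, h3⟩
    · rintro ⟨i, j, h1, h2, rfl⟩
      refine ⟨Nat.pair n (Nat.pair i j), ?_⟩
      simp [hfdef, h1, h2]
  have hunion : ∀ n, testUnion cyl U n = ⋃ i, clop (ℓ (n + 2 + i)) (c (n + 2 + i)) b := by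
    intro n
    ext ω'
    simp only [testUnion, mem_ofPred_eq, hmem, clop_eq, mem_iUnion, Finset.mem_filter,
      Finset.mem_range, exists_prop]
    constructor
    · rintro ⟨_, ⟨i, j, h1, h2, rfl⟩, h3⟩
      exact ⟨i, j, ⟨h1, h2⟩, h3⟩
    · rintro ⟨i, j, ⟨h1, h2⟩, h3⟩
      exact ⟨_, ⟨i, j, h1, h2, rfl⟩, h3⟩
  have htest : IsMLTest cyl P U := by
    refine ⟨⟨f, hf, hU⟩, fun n => ?_, fun n => ?_⟩
    · rw [hunion, hunion]
      refine iUnion_subset fun i => ?_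
      have := subset_iUnion (fun i => clop (ℓ (n + 2 + i)) (c (n + 2 + i)) b) (i + 1)
      rwa [show n + 2 + (i + 1) = n + 1 + 2 + i by ring] at this
    · rw [hunion]
      calc P (⋃ i, clop (ℓ (n + 2 + i)) (c (n + 2 + i)) b)
          ≤ ∑' i, P (clop (ℓ (n + 2 + i)) (c (n + 2 + i)) b) := measure_iUnion_le _
        _ ≤ ∑' i, (2⁻¹ : ℝ≥0∞) ^ (n + 2 + i) := ENNReal.tsum_le_tsum fun i => hle _
        _ = (2⁻¹ : ℝ≥0∞) ^ (n + 1) := by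
            simp_rw [pow_add _ (n + 2)]
            rw [ENNReal.tsum_mul_left, ENNReal.tsum_geometric, ENNReal.one_sub_inv_two, inv_inv,
              pow_succ _ (n + 1), mul_assoc,
              ENNReal.inv_mul_cancel two_ne_zero ENNReal.ofNat_ne_top, mul_one]
        _ < (2⁻¹ : ℝ≥0∞) ^ n := by
            have h0 : (2⁻¹ : ℝ≥0∞) ^ n ≠ 0 := (ENNReal.pow_pos (by simp) n).ne'
            have ht : (2⁻¹ : ℝ≥0∞) ^ n ≠ ⊤ := ENNReal.pow_ne_top (by simp)
            rw [pow_succ, ← div_eq_mul_inv]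
            exact ENNReal.half_lt_self h0 ht
  have := hω U htest
  simp only [mem_iInter, not_forall, hunion, mem_iUnion, not_exists] at this
  exact this

/-- A recursively enumerable set is determined by a code of an enumeration of it. -/
theorem countable_setOf_reSet (β : Type) [Primcodable β] : {A : Set β | RESet A}.Countable := by
  refine (countable_range fun c : Nat.Partrec.Code =>
    {a : β | ∃ n, Encodable.encode (some a) ∈ c.eval n}).mono ?_
  rintro A ⟨f, hf, rfl⟩
  obtain ⟨c, hc⟩ := Nat.Partrec.Code.exists_code.1 hf
  refine ⟨c, ?_⟩
  ext a
  simp only [hc, mem_ofPred_eq]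
  refine exists_congr fun n => ?_
  have : Encodable.encode (f n) = Encodable.encode (some a) ↔ f n = some a := Encodable.encode_inj
  simpa [eq_comm] using this

/-- There are only countably many tests, so almost every sequence passes all of them. -/
theorem measure_setOf_not_random {P : Measure Seq} : P {ω | ¬ Random1 P ω} = 0 := by
  have hcount : {U : Set (ℕ × S) | IsMLTest cyl P U}.Countable :=
    (countable_setOf_reSet _).mono fun _ h => h.1
  refine measure_mono_null (t := ⋃ U ∈ {U : Set (ℕ × S) | IsMLTest cyl P U},
    ⋂ n, testUnion cyl U n) (fun ω hω => ?_) ((measure_biUnion_null_iff hcount).2 fun U hU => ?_)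
  · simp only [Random1, MLRandom, not_forall, mem_ofPred_eq, not_not] at hω
    obtain ⟨U, hU, h⟩ := hω
    exact mem_biUnion hU h
  · have hlim : Tendsto (fun n : ℕ => (2⁻¹ : ℝ≥0∞) ^ n) atTop (nhds 0) :=
      ENNReal.tendsto_pow_atTop_nhds_zero_of_lt_one (by simp)
    refine le_antisymm (ge_of_tendsto' hlim fun n => ?_) zero_le
    exact (measure_mono (iInter_subset _ n)).trans (hU.2.2 n).le

/-! ### Mutual singularity -/

/-- Theorem 5, Martin-Löf: for computable probabilities P, Q on Ω,
R^P ∩ R^Q = ∅ iff P and Q are mutually singular. -/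
theorem martinlof_mutual_singularity (P Q : Measure Seq)
    (hP : ComputableProb P) (hQ : ComputableProb Q) :
    ({ω : Seq | Random1 P ω} ∩ {ω : Seq | Random1 Q ω} = ∅) ↔
      Measure.MutuallySingular P Q := by
  constructor
  · intro h
    refine Measure.MutuallySingular.mk (s := {ω | ¬ Random1 P ω}) (t := {ω | ¬ Random1 Q ω})
      measure_setOf_not_random measure_setOf_not_random fun ω _ => ?_
    by_contra hω
    simp only [mem_union, mem_ofPred_eq, not_or, not_not] at hω
    exact Set.notMem_empty ω (h ▸ hω)
  · intro h
    obtain ⟨ℓ, c, hℓ, hc, h1, h2⟩ := exists_computable_clop hP hQ h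
    refine Set.eq_empty_iff_forall_notMem.2 fun ω hω => ?_
    obtain ⟨n, hn⟩ := eventually_notMem_clop hℓ hc true h1 hω.1
    obtain ⟨m, hm⟩ := eventually_notMem_clop hℓ hc false h2 hω.2
    -- at the common index `n + m + 2` the sequence lies in neither a clopen set nor its complement
    have hn' := hn m
    have hm' := hm n
    rw [show m + 2 + n = n + 2 + m by ring] at hm'
    simp only [clop, mem_ofPred_eq, Bool.not_eq_true, Bool.not_eq_false] at hn' hm'
    exact absurd (hn'.symm.trans hm') (by decide)


end AlgRand
end
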